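/- arXiv:cs/0205011 — 6 statements merged into one kernel-verified Lean document; each statement's English description precedes it below -/
import Mathlib

section
/- Every redundant edge of G lies on exactly one directed cycle of G. -/
/-- A set `S` of directed edges strongly connects the vertex set `V`:
for every pair of vertices there is a directed path using only edges of `S`. -/
def StronglyConnects {V : Type*} (S : Set (V × V)) : Prop :=
  ∀ u v : V, Relation.ReflTransGen (fun a b => (a, b) ∈ S) u v

/-- The edges of the closed walk determined by the vertex list `c`
(consecutive pairs, wrapping around from the last vertex to the first). -/
def cycleEdges {V : Type*} (c : List V) : List (V × V) := c.zip (c.rotate 1)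

/-- `c` is a directed cycle of the graph with edge set `E`: a nonempty list of
distinct vertices all of whose consecutive (wrap-around) pairs are edges.
Its length (number of edges) is `c.length`. -/
def IsCycle {V : Type*} (E : Set (V × V)) (c : List V) : Prop :=
  c ≠ [] ∧ c.Nodup ∧ ∀ e ∈ cycleEdges c, e ∈ E

/-- An edge is redundant if deleting it leaves a strongly connected graph. -/
def Redundant {V : Type*} (E : Set (V × V)) (e : V × V) : Prop :=
  e ∈ E ∧ StronglyConnects (E \ {e})

/-- An edge is necessary if deleting it destroys strong connectivity. -/
def Necessary {V : Type*} (E : Set (V × V)) (e : V × V) : Prop :=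
  e ∈ E ∧ ¬ StronglyConnects (E \ {e})

/-- The set of necessary edges. -/
def necessarySet {V : Type*} (E : Set (V × V)) : Set (V × V) :=
  {e | Necessary E e}

/-- An edge `(u, v)` is unsatisfied if there is no directed path from `v`
back to `u` consisting only of necessary edges. -/
def Unsatisfied {V : Type*} (E : Set (V × V)) (e : V × V) : Prop :=
  e ∈ E ∧ ¬ Relation.ReflTransGen (fun a b => Necessary E (a, b)) e.2 e.1

/-- A redundant edge `r` provides a cycle for an unsatisfied edge `(u, v)` if
there is a directed path from `v` to `u` consisting of necessary edges and `r`. -/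
def ProvidesCycle {V : Type*} (E : Set (V × V)) (r : V × V) (e : V × V) : Prop :=
  Relation.ReflTransGen (fun a b => Necessary E (a, b) ∨ (a, b) = r) e.2 e.1

/-- `w` is a cut vertex: deleting `w` disconnects the underlying undirected graph,
i.e. some two vertices distinct from `w` are joined by no undirected path avoiding `w`. -/
def IsCutVertex {V : Type*} (E : Set (V × V)) (w : V) : Prop :=
  ∃ u v : V, u ≠ w ∧ v ≠ w ∧
    ¬ Relation.ReflTransGen
        (fun a b => a ≠ w ∧ b ≠ w ∧ ((a, b) ∈ E ∨ (b, a) ∈ E)) u v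

theorem aux_path {V : Type*} {r : V → V → Prop} {a b : V} (h : Relation.ReflTransGen r a b) :
    ∃ l : List V, (a :: l).IsChain r ∧ (a :: l).Nodup ∧ (a :: l).getLast? = some b := by
  induction h using Relation.ReflTransGen.head_induction_on with
  | refl => exact ⟨[], by simp⟩
  | @head a c hac _ ih =>
    obtain ⟨l, h1, h2, h3⟩ := ih
    by_cases ha : a ∈ c :: l
    · obtain ⟨s, t, hst⟩ := List.append_of_mem ha
      rw [hst] at h1 h2 h3
      refine ⟨t, h1.right_of_append, (List.nodup_append.1 h2).2.1, ?_⟩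
      simpa using h3
    · exact ⟨c :: l, List.isChain_cons_cons.2 ⟨hac, h1⟩, List.nodup_cons.2 ⟨ha, h2⟩, by simpa using h3⟩

theorem aux_zip {V : Type*} {E : Set (V × V)} (z : V) : ∀ (l : List V) (x : V),
    (x :: (l ++ [z])).IsChain (fun a b => (a, b) ∈ E) →
    ∀ e ∈ (x :: l).zip (l ++ [z]), e ∈ E := by
  intro l
  induction l with
  | nil => intro x h e he; simp at h he; subst he; exact h
  | cons y l ih =>
    intro x h e he
    rw [List.cons_append, List.isChain_cons_cons] at h
    rw [List.cons_append, List.zip_cons_cons, List.mem_cons] at he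
    rcases he with rfl | he
    · exact h.1
    · exact ih y h.2 e he

theorem aux_cycle {V : Type*} {E : Set (V × V)} (a : V) (l : List V)
    (h : (a :: (l ++ [a])).IsChain (fun a b => (a, b) ∈ E)) (hn : (a :: l).Nodup) :
    IsCycle E (a :: l) := by
  refine ⟨by simp, hn, ?_⟩
  have : cycleEdges (a :: l) = (a :: l).zip (l ++ [a]) := by simp [cycleEdges]
  rw [this]
  exact aux_zip a l a h

/-- Three mutually joined vertices give a cut vertex. -/
theorem aux_triangle {V : Type*} (E : Set (V × V))
    (hconn : StronglyConnects E)
    (hcyc : ∀ c : List V, IsCycle E c → c.length ≤ 3)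
    (T : Set V)
    (hT : ∀ a ∈ T, ∀ b ∈ T, a ≠ b → ∃ c ∈ T, c ≠ a ∧ c ≠ b ∧ (b, c) ∈ E ∧ (c, a) ∈ E)
    (hT2 : ∀ a ∈ T, ∃ b ∈ T, b ≠ a) (u : V) (hu : u ∈ T)
    (y0 : V) (hy0 : y0 ∉ T) : ∃ a, IsCutVertex E a := by
  let r : V → V → Prop := fun x y => (x, y) ∈ E ∧ x ∉ T ∧ y ∉ T
  have ear : ∀ a ∈ T, ∀ b ∈ T, ∀ z z', z ∉ T → z' ∉ T → (a, z) ∈ E → (z', b) ∈ E →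
      Relation.ReflTransGen r z z' → a = b := by
    intro a ha b hb z z' hz hz' haz hzb hr
    by_contra hab
    obtain ⟨c, hc, hca, hcb, hbc, hca'⟩ := hT a ha b hb hab
    obtain ⟨l, h1, h2, h3⟩ := aux_path hr
    have hout : ∀ x ∈ z :: l, x ∉ T := by
      have : ∀ (l : List V) (z : V), z ∉ T → (z :: l).IsChain r → ∀ x ∈ z :: l, x ∉ T := by
        intro l
        induction l with
        | nil => intro z hz _ x hx; simp at hx; subst hx; exact hz
        | cons y l ih =>
          intro z hz h x hx
          rw [List.isChain_cons_cons] at h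
          rcases List.mem_cons.1 hx with rfl | hx
          · exact hz
          · exact ih y h.1.2.2 h.2 x hx
      exact this l z hz h1
    have hC : IsCycle E (a :: ((z :: l) ++ [b, c])) := by
      apply aux_cycle
      · rw [List.append_assoc, List.cons_append, List.isChain_cons_cons, ← List.cons_append]
        refine ⟨haz, ?_⟩
        rw [List.isChain_append]
        refine ⟨h1.imp (fun _ _ h => h.1), by simp [hbc, hca'], ?_⟩
        intro x hx y hy
        rw [h3] at hx
        simp at hx hy
        subst hx; subst hy; exact hzb
      · have := hout a
        have := hout b
        have := hout c
        rw [List.nodup_cons, List.nodup_append]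
        refine ⟨?_, h2, by simp [Ne.symm hcb], ?_⟩
        · intro h
          simp only [List.mem_append] at h
          rcases h with h | h
          · tauto
          · simp at h; grind
        · intro x hx y hy; simp only [List.mem_cons, List.not_mem_nil, or_false] at hy
          rintro rfl
          rcases hy with rfl | rfl <;> tauto
    have := hcyc _ hC
    simp at this; omega
  let R : V → V → Prop := fun a y => y ∉ T ∧ ∃ z, z ∉ T ∧ (a, z) ∈ E ∧ Relation.ReflTransGen r z y
  have hR : ∀ y, y ∉ T → ∃ a ∈ T, R a y := by
    intro y
    induction hconn u y with
    | refl => intro h; exact absurd hu h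
    | @tail b c _ hbc ih =>
      intro hc
      by_cases hb : b ∈ T
      · exact ⟨b, hb, hc, c, hc, hbc, .refl⟩
      · obtain ⟨a, ha, _, z, hz, h1, h2⟩ := ih hb
        exact ⟨a, ha, hc, z, hz, h1, h2.tail ⟨hbc, hb, hc⟩⟩
  have hB : ∀ y, y ∉ T → ∃ b ∈ T, ∃ z, z ∉ T ∧ (z, b) ∈ E ∧ Relation.ReflTransGen r y z := by
    intro y
    induction hconn y u using Relation.ReflTransGen.head_induction_on with
    | refl => intro h; exact absurd hu h
    | @head c b hbc _ ih =>
      intro hc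
      by_cases hb : b ∈ T
      · exact ⟨b, hb, c, hc, hbc, .refl⟩
      · obtain ⟨a, ha, z, hz, h1, h2⟩ := ih hb
        exact ⟨a, ha, z, hz, h1, h2.head ⟨hbc, hc, hb⟩⟩
  have huniq : ∀ y a b, a ∈ T → b ∈ T → R a y → R b y → a = b := by
    rintro y a b ha hb ⟨hy, z, hz, h1, h2⟩ ⟨_, z', hz', h1', h2'⟩
    obtain ⟨c, hc, x, hx, h3, h4⟩ := hB y hy
    exact (ear a ha c hc z x hz hx h1 h3 (h2.trans h4)).trans
      (ear b hb c hc z' x hz' hx h1' h3 (h2'.trans h4)).symm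
  obtain ⟨a, ha, hay⟩ := hR y0 hy0
  obtain ⟨b, hb, hba⟩ := hT2 a ha
  refine ⟨a, y0, b, ?_, hba, ?_⟩
  · rintro rfl; exact hy0 ha
  · intro h
    have : R a b := by
      clear hba
      clear hb
      induction h with
      | refl => exact hay
      | @tail y y' _ hyy ih =>
        obtain ⟨_, hne, hE⟩ := hyy
        have ih0 := ih
        obtain ⟨hy, z, hz, h1, h2⟩ := ih
        by_cases hy' : y' ∈ T
        · exfalso
          rcases hE with hE | hE
          · exact hne (ear a ha y' hy' z y hz hy h1 hE h2).symm
          · exact hne (huniq y y' a hy' ha ⟨hy, y, hy, hE, .refl⟩ ih0)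
        · rcases hE with hE | hE
          · exact ⟨hy', z, hz, h1, h2.tail ⟨hE, hy, hy'⟩⟩
          · obtain ⟨d, hd, hdy⟩ := hR y' hy'
            obtain ⟨_, z', hz', h1', h2'⟩ := id hdy
            have := huniq y d a hd ha ⟨hy, z', hz', h1', h2'.tail ⟨hE, hy', hy⟩⟩ ih0
            subst this; exact hdy
    exact this.1 hb

theorem aux_form {V : Type*} {E : Set (V × V)} {u v : V} (huv : u ≠ v)
    (hcyc : ∀ c : List V, IsCycle E c → c.length ≤ 3) (c : List V)
    (hc : IsCycle E c) (hh : c.head? = some u) (he : (u, v) ∈ cycleEdges c) :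
    (c = [u, v] ∧ (v, u) ∈ E) ∨
      ∃ w, c = [u, v, w] ∧ w ≠ u ∧ w ≠ v ∧ (v, w) ∈ E ∧ (w, u) ∈ E := by
  have hl := hcyc c hc
  obtain ⟨h1, h2, h3⟩ := hc
  match c, hl with
  | [], _ => simp at hh
  | [a], _ => simp [cycleEdges] at *; grind
  | [a, b], _ => simp [cycleEdges] at *; grind
  | [a, b, d], _ => simp [cycleEdges] at *; grind
  | a :: b :: d :: e :: l, hl => simp at hl; omega

/-- The middle of a simple path avoiding the edge. -/
theorem aux_mid {V : Type*} {E : Set (V × V)} {u v : V} (huv : u ≠ v)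
    (h : Relation.ReflTransGen (fun a b => (a, b) ∈ E \ {(u, v)}) u v) :
    ∃ m : List V, m ≠ [] ∧ (u :: (m ++ [v])).IsChain (fun a b => (a, b) ∈ E) ∧
      (u :: (m ++ [v])).Nodup := by
  obtain ⟨l, h1, h2, h3⟩ := aux_path h
  rcases List.eq_nil_or_concat l with rfl | ⟨m, x, rfl⟩
  · simp at h3; exact absurd h3 huv
  · rw [List.concat_eq_append] at *
    have : x = v := by
      rw [← List.cons_append, List.getLast?_concat] at h3
      simpa using h3
    subst this
    refine ⟨m, ?_, h1.imp (fun _ _ h => h.1), h2⟩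
    rintro rfl
    simp at h1

theorem aux_two {V : Type*} {E : Set (V × V)} {u v : V} (hE : (u, v) ∈ E)
    (hcyc : ∀ c : List V, IsCycle E c → c.length ≤ 3) (w w' : V)
    (h4 : (v, w) ∈ E) (h4' : (w', u) ∈ E) (p q s : List V)
    (hch : (u :: ((p ++ w :: (q ++ w' :: s)) ++ [v])).IsChain (fun a b => (a, b) ∈ E))
    (hn : (u :: ((p ++ w :: (q ++ w' :: s)) ++ [v])).Nodup) : False := by
  have hC : IsCycle E (w :: (q ++ [w', u, v])) := by
    apply aux_cycle
    · have : (w :: (q ++ [w'])).IsChain (fun a b => (a, b) ∈ E) := by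
        refine hch.infix ⟨u :: p, s ++ [v], by simp⟩
      have e : w :: (q ++ [w', u, v] ++ [w]) = (w :: (q ++ [w'])) ++ [u, v, w] := by simp
      rw [e, List.isChain_append]
      refine ⟨this, by simp [hE, h4], ?_⟩
      intro x hx y hy
      rw [← List.cons_append, List.getLast?_concat] at hx
      simp at hx hy
      subst hx; subst hy; exact h4'
    · simp [List.nodup_append, List.nodup_cons] at hn ⊢
      grind
  have := hcyc _ hC
  simp at this

theorem aux_caseB {V : Type*} {E : Set (V × V)} {u v : V} (hE : (u, v) ∈ E)
    (hcyc : ∀ c : List V, IsCycle E c → c.length ≤ 3) (m : List V) (hm : m ≠ [])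
    (hch : (u :: (m ++ [v])).IsChain (fun a b => (a, b) ∈ E))
    (hn : (u :: (m ++ [v])).Nodup) (w w' : V) (hne : w ≠ w')
    (h1 : w ≠ u) (h2 : w ≠ v) (h3 : (v, w) ∈ E) (h4 : (w, u) ∈ E)
    (h1' : w' ≠ u) (h2' : w' ≠ v) (h3' : (v, w') ∈ E) (h4' : (w', u) ∈ E) : False := by
  have key : ∀ w, w ≠ u → w ≠ v → (v, w) ∈ E → (w, u) ∈ E → w ∈ m := by
    intro w h1 h2 h3 h4
    by_contra hw
    have hC : IsCycle E (w :: (u :: (m ++ [v]))) := by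
      apply aux_cycle
      · rw [List.cons_append, List.isChain_cons_cons, ← List.cons_append, List.isChain_append]
        refine ⟨h4, hch, by simp, ?_⟩
        intro x hx y hy
        rw [← List.cons_append, List.getLast?_concat] at hx
        simp at hx hy
        subst hx; subst hy; exact h3
      · rw [List.nodup_cons]
        exact ⟨by simp [h1, h2, hw], hn⟩
    have := hcyc _ hC
    have := List.length_pos_iff.2 hm
    simp at *
    omega
  obtain ⟨p, q, rfl⟩ := List.append_of_mem (key w h1 h2 h3 h4)
  have := key w' h1' h2' h3' h4'
  rcases List.mem_append.1 this with h | h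
  · obtain ⟨s, t, rfl⟩ := List.append_of_mem h
    apply aux_two hE hcyc w' w h3' h4 s t q
    · simpa using hch
    · simpa using hn
  · rcases List.mem_cons.1 h with h | h
    · exact hne h.symm
    obtain ⟨s, t, rfl⟩ := List.append_of_mem h
    exact aux_two hE hcyc w w' h3 h4' p s t hch hn

theorem aux_caseA {V : Type*} [Fintype V] {E : Set (V × V)} (hconn : StronglyConnects E)
    (hcard : 4 ≤ Fintype.card V)
    (hcut : ∀ w : V, ¬ IsCutVertex E w) {u v : V} (huv : u ≠ v) (hE : (u, v) ∈ E)
    (hcyc : ∀ c : List V, IsCycle E c → c.length ≤ 3) (m : List V) (hm : m ≠ [])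
    (hch : (u :: (m ++ [v])).IsChain (fun a b => (a, b) ∈ E))
    (hn : (u :: (m ++ [v])).Nodup) (w : V) (hvu : (v, u) ∈ E)
    (h1 : w ≠ u) (h2 : w ≠ v) (h3 : (v, w) ∈ E) (h4 : (w, u) ∈ E) : False := by
  have hC : IsCycle E (u :: (m ++ [v])) := by
    apply aux_cycle _ _ _ hn
    rw [← List.cons_append, List.isChain_append]
    refine ⟨hch, by simp, ?_⟩
    intro x hx y hy
    rw [← List.cons_append, List.getLast?_concat] at hx
    simp at hx hy
    subst hx; subst hy; exact hvu
  have hl := hcyc _ hC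
  match m, hm, hl with
  | x :: y :: l, _, hl => simp at hl; omega
  | [x], _, _ =>
    simp at hch hn
    have hxw : x = w := by
      by_contra hxw
      have hC : IsCycle E [v, w, u, x] := by
        apply aux_cycle
        · simp [*]
        · simp; grind
      have := hcyc _ hC
      simp at this
    subst hxw
    classical
    obtain ⟨y0, hy0⟩ : ∃ y, y ∉ ({u, v, x} : Finset V) := by
      by_contra! hall
      have h5 : (Finset.univ : Finset V) ⊆ {u, v, x} := fun y _ => hall y
      have := Finset.card_le_card h5
      have := Finset.card_le_three (a := u) (b := v) (c := x)
      rw [Finset.card_univ] at *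
      omega
    obtain ⟨a, ha⟩ := aux_triangle E hconn hcyc {u, v, x} (by
      rintro a (rfl | rfl | rfl) b (rfl | rfl | rfl) hab <;> simp <;> grind) (by
      rintro a (rfl | rfl | rfl) <;> simp <;> grind) u (by simp) y0 (by simpa using hy0)
    exact hcut a ha

/-- Every redundant edge of `G` lies on exactly one directed cycle of `G`
(cycles are normalized to start at the tail of the given edge, so that each
geometric cycle through the edge is represented by a unique list). -/
theorem redundant_edge_unique_cycle {V : Type*} [Fintype V] (E : Set (V × V))
    (hconn : StronglyConnects E)
    (hcyc : ∀ c : List V, IsCycle E c → c.length ≤ 3)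
    (hcard : 4 ≤ Fintype.card V)
    (hcut : ∀ w : V, ¬ IsCutVertex E w)
    (u v : V) (hred : Redundant E (u, v)) :
    ∃! c : List V, IsCycle E c ∧ c.head? = some u ∧ (u, v) ∈ cycleEdges c := by
  obtain ⟨hE, hr⟩ := hred
  by_cases huv : u = v
  · subst huv
    refine ⟨[u], ⟨⟨by simp, by simp, by simp [cycleEdges, hE]⟩, by simp, by simp [cycleEdges]⟩, ?_⟩
    rintro c ⟨hc, hh, he⟩
    have hl := hcyc c hc
    obtain ⟨h1, h2, h3⟩ := hc
    match c, hl with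
    | [], _ => simp at hh
    | [a], _ => simp at hh; simp [hh]
    | [a, b], _ => simp [cycleEdges] at *; grind
    | [a, b, d], _ => simp [cycleEdges] at *; grind
    | a :: b :: d :: e :: l, hl => simp at hl; omega
  obtain ⟨m, hm, hch, hn⟩ := aux_mid huv (hr u v)
  apply existsUnique_of_exists_of_unique
  · obtain ⟨l, h1, h2, h3⟩ := aux_path (hconn v u)
    rcases List.eq_nil_or_concat l with rfl | ⟨k, x, rfl⟩
    · simp at h3; exact absurd h3.symm huv
    rw [List.concat_eq_append] at *
    have : x = u := by
      rw [← List.cons_append, List.getLast?_concat] at h3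
      simpa using h3
    subst this
    refine ⟨x :: (v :: k), aux_cycle _ _ ?_ ?_, by simp, by simp [cycleEdges]⟩
    · rw [List.cons_append, List.isChain_cons_cons]
      exact ⟨hE, h1⟩
    · rw [← List.cons_append, List.nodup_append] at h2
      rw [List.nodup_cons]
      refine ⟨fun h => h2.2.2 x h x (by simp) rfl, h2.1⟩
  · rintro c c' ⟨hc, hh, he⟩ ⟨hc', hh', he'⟩
    rcases aux_form huv hcyc c hc hh he with ⟨rfl, h⟩ | ⟨w, rfl, h1, h2, h3, h4⟩ <;>
    rcases aux_form huv hcyc c' hc' hh' he' with ⟨rfl, h'⟩ | ⟨w', rfl, h1', h2', h3', h4'⟩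
    · rfl
    · exact (aux_caseA hconn hcard hcut huv hE hcyc m hm hch hn w' h h1' h2' h3' h4').elim
    · exact (aux_caseA hconn hcard hcut huv hE hcyc m hm hch hn w h' h1 h2 h3 h4).elim
    · by_cases hw : w = w'
      · rw [hw]
      · exact (aux_caseB hE hcyc m hm hch hn w w' hw h1 h2 h3 h4 h1' h2' h3' h4').elim
end

section
/- Every unsatisfied edge of G is necessary (that is, no unsatisfied edge is redundant). -/
/-- Simple path from the first vertex to the second; the list holds all vertices but the last. -/
inductive SP {V : Type*} (R : V → V → Prop) : V → V → List V → Prop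
  | nil (a : V) : SP R a a []
  | cons {a c b : V} {l : List V} : R a c → SP R c b l → a ∉ l → a ≠ b → SP R a b (a :: l)

namespace SP

variable {V : Type*} {R : V → V → Prop}

theorem mono {R' : V → V → Prop} (h : ∀ a b, R a b → R' a b) {a b : V} {l : List V}
    (p : SP R a b l) : SP R' a b l := by
  induction p with
  | nil a => exact .nil a
  | cons h1 _ h2 h3 ih => exact .cons (h _ _ h1) ih h2 h3

theorem nodup {a b : V} {l : List V} (p : SP R a b l) : (l ++ [b]).Nodup := by
  induction p with
  | nil a => simp
  | cons h1 _ h2 h3 ih =>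
    rw [List.cons_append, List.nodup_cons]
    exact ⟨by simp [h2, h3], ih⟩

theorem last_notMem {a b : V} {l : List V} (p : SP R a b l) : b ∉ l := by
  have := p.nodup
  grind

theorem nd {a b : V} {l : List V} (p : SP R a b l) : l.Nodup := by
  have := p.nodup
  grind

theorem head_mem {a b : V} {l : List V} (p : SP R a b l) (h : a ≠ b) : a ∈ l := by
  cases p with
  | nil => exact absurd rfl h
  | cons => simp

theorem mem_rel {a b : V} {l : List V} (p : SP R a b l) : ∀ x ∈ l, ∃ y, R x y := by
  induction p with
  | nil a => simp
  | cons h1 _ h2 h3 ih =>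
    intro x hx
    rcases List.mem_cons.1 hx with rfl | hx
    · exact ⟨_, h1⟩
    · exact ih x hx

theorem split {a b : V} {l : List V} (p : SP R a b l) (x : V) (hx : x ∈ l) :
    ∃ l1 l2, l = l1 ++ l2 ∧ SP R a x l1 ∧ SP R x b l2 := by
  classical
  induction p with
  | nil a => simp at hx
  | @cons a c b l h1 p h2 h3 ih =>
    by_cases hxa : x = a
    · subst hxa
      exact ⟨[], x :: l, rfl, .nil _, .cons h1 p h2 h3⟩
    · obtain ⟨l1, l2, rfl, q1, q2⟩ := ih (by simpa [hxa] using hx)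
      exact ⟨a :: l1, l2, rfl, .cons h1 q1 (by grind) (by grind), q2⟩

theorem exists_of_rtg {a b : V} (h : Relation.ReflTransGen R a b) : ∃ l, SP R a b l := by
  classical
  induction h using Relation.ReflTransGen.head_induction_on with
  | refl => exact ⟨[], .nil _⟩
  | @head a c h1 _ ih =>
    obtain ⟨l, p⟩ := ih
    by_cases hab : a = b
    · subst hab; exact ⟨[], .nil _⟩
    by_cases hal : a ∈ l
    · obtain ⟨_, l2, _, _, q⟩ := p.split a hal
      exact ⟨l2, q⟩
    · exact ⟨_, .cons h1 p hal hab⟩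

theorem edges {a b : V} {l : List V} (p : SP R a b l) (z : V) (hz : R b z) :
    ∀ e ∈ (l ++ [b]).zip ((l ++ [b]).tail ++ [z]), R e.1 e.2 := by
  induction p with
  | nil a => simpa using hz
  | @cons a c b l h1 p h2 h3 ih =>
    intro e he
    have ih := ih hz
    cases p with
    | nil =>
      simp at he
      rcases he with rfl | rfl
      · exact h1
      · exact hz
    | cons g1 g2 g3 g4 =>
      simp only [List.cons_append, List.tail_cons, List.zip_cons_cons, List.mem_cons] at he ih
      rcases he with rfl | he
      · exact h1
      · exact ih e (by simpa using he)

end SP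

section

variable {V : Type*} {E : Set (V × V)}

theorem sp_len (hcyc : ∀ c : List V, IsCycle E c → c.length ≤ 3) {a b : V} {l : List V}
    (p : SP (fun a b => (a, b) ∈ E) a b l) (h : (b, a) ∈ E) : l.length ≤ 2 := by
  have := hcyc (l ++ [b]) ⟨by simp, p.nodup, by
    intro e he
    have := p.edges a h e
    apply this
    unfold cycleEdges at he
    cases p with
    | nil => simpa using he
    | cons => simpa using he⟩
  simp at this
  omega

theorem minus_len {u v : V} {l : List V} (huv : u ≠ v)
    (p : SP (fun a b => (a, b) ∈ E \ {(u, v)}) u v l) : 2 ≤ l.length := by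
  cases p with
  | nil => exact absurd rfl huv
  | cons h1 p h2 h3 =>
    cases p with
    | nil => simp at h1
    | cons => simp

theorem sp_two {R : V → V → Prop} {u v : V} {l : List V} (p : SP R u v l) (h : l.length = 2) :
    ∃ b, l = [u, b] ∧ R u b ∧ R b v ∧ b ≠ u ∧ b ≠ v := by
  cases p with
  | nil => simp at h
  | cons h1 p h2 h3 =>
    cases p with
    | nil => simp at h
    | cons g1 p g2 g3 =>
      cases p with
      | nil => exact ⟨_, rfl, h1, g1, by grind, g3⟩
      | cons => simp at h

theorem mid_mem (hcyc : ∀ c : List V, IsCycle E c → c.length ≤ 3) {u v w : V} {l : List V}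
    (huv : u ≠ v) (p : SP (fun a b => (a, b) ∈ E \ {(u, v)}) u v l)
    (hvw : (v, w) ∈ E) (hwu : (w, u) ∈ E) (hv : w ≠ v) : w ∈ l := by
  by_contra hw
  have q : SP (fun a b => (a, b) ∈ E) w v (w :: l) :=
    .cons hwu (p.mono fun _ _ h => h.1) hw hv
  have h1 := sp_len hcyc q hvw
  have h2 := minus_len huv p
  simp at h1
  omega

theorem two_mid_aux (hcyc : ∀ c : List V, IsCycle E c → c.length ≤ 3) {u v w b : V} {l : List V}
    (huv : u ≠ v) (he : (u, v) ∈ E)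
    (hvw : (v, w) ∈ E) (hbu : (b, u) ∈ E) (hb : b ≠ v) (hbu' : b ≠ u) (hwb : w ≠ b)
    (q : SP (fun a b => (a, b) ∈ E) w b l) (hu : u ∉ l) (hv : v ∉ l) : False := by
  have q' : SP (fun a b => (a, b) ∈ E) u b (u :: v :: l) :=
    .cons he (.cons hvw q hv hb.symm) (by simp [huv, hu]) hbu'.symm
  have h1 := sp_len hcyc q' hbu
  have h2 := q.head_mem hwb
  have := List.length_pos_of_mem h2
  simp only [List.length_cons] at h1
  omega

theorem two_mid (hcyc : ∀ c : List V, IsCycle E c → c.length ≤ 3) {u v w b : V}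
    (huv : u ≠ v) (he : (u, v) ∈ E)
    (hr : StronglyConnects (E \ {(u, v)}))
    (hvw : (v, w) ∈ E) (hwu : (w, u) ∈ E) (hv : w ≠ v) (hu : w ≠ u)
    (hvb : (v, b) ∈ E) (hbu : (b, u) ∈ E) (hbv : b ≠ v) (hbu' : b ≠ u) (hwb : w ≠ b) : False := by
  obtain ⟨l, p⟩ := SP.exists_of_rtg (hr u v)
  have hwl := mid_mem hcyc huv p hvw hwu hv
  have hbl := mid_mem hcyc huv p hvb hbu hbv
  have hvl := p.last_notMem
  have hnd := p.nd
  obtain ⟨l1, l2, rfl, p1, p2⟩ := p.split w hwl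
  have hu1 := p1.head_mem hu.symm
  rcases List.mem_append.1 hbl with hb1 | hb2
  · obtain ⟨l3, l4, rfl, p3, p4⟩ := p1.split b hb1
    have hu3 := p3.head_mem hbu'.symm
    exact two_mid_aux hcyc huv he hvb hwu hv hu hwb.symm (p4.mono fun _ _ h => h.1)
      (by grind) (by grind)
  · obtain ⟨l3, l4, rfl, p3, p4⟩ := p2.split b hb2
    exact two_mid_aux hcyc huv he hvw hbu hbv hbu' hwb (p3.mono fun _ _ h => h.1)
      (by grind) (by grind)

theorem get_mid (hcyc : ∀ c : List V, IsCycle E c → c.length ≤ 3) {u v : V} {l : List V}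
    (huv : u ≠ v) (he : (u, v) ∈ E) (hvu : (v, u) ∉ E)
    (q : SP (fun a b => (a, b) ∈ E) v u l) :
    ∃ b, b ∈ l ∧ (v, b) ∈ E ∧ (b, u) ∈ E ∧ b ≠ v ∧ b ≠ u := by
  have h1 := sp_len hcyc q he
  have h2 : 2 ≤ l.length := by
    cases q with
    | nil => exact absurd rfl huv
    | cons g1 p g2 g3 =>
      cases p with
      | nil => exact absurd g1 hvu
      | cons => simp
  obtain ⟨b, rfl, h3, h4, h5, h6⟩ := sp_two q (by omega)
  exact ⟨b, by simp, h3, h4, h5, h6⟩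

theorem caseB (hconn : StronglyConnects E)
    (hcyc : ∀ c : List V, IsCycle E c → c.length ≤ 3) {u v : V}
    (huv : u ≠ v) (he : (u, v) ∈ E) (hvu : (v, u) ∉ E)
    (hr : StronglyConnects (E \ {(u, v)})) :
    Relation.ReflTransGen (fun a b => Necessary E (a, b)) v u := by
  obtain ⟨l, p⟩ := SP.exists_of_rtg (hconn v u)
  obtain ⟨w, -, hvw, hwu, hwv, hwu'⟩ := get_mid hcyc huv he hvu p
  by_cases n1 : StronglyConnects (E \ {(v, w)})
  · exfalso
    obtain ⟨l, q⟩ := SP.exists_of_rtg (n1 v w)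
    have h2 := minus_len hwv.symm q
    have q' := q.mono (R' := fun a b => (a, b) ∈ E) fun _ _ h => h.1
    by_cases hu : u ∈ l
    · have hw := q.last_notMem
      obtain ⟨l1, l2, rfl, p1, p2⟩ := q'.split u hu
      obtain ⟨b, hb, h3, h4, h5, h6⟩ := get_mid hcyc huv he hvu p1
      exact two_mid hcyc huv he hr hvw hwu hwv hwu' h3 h4 h5 h6 (by grind)
    · have := sp_len hcyc (SP.cons he q' hu hwu'.symm) hwu
      simp at this
      omega
  by_cases n2 : StronglyConnects (E \ {(w, u)})
  · exfalso
    obtain ⟨l, q⟩ := SP.exists_of_rtg (n2 w u)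
    have h2 := minus_len hwu' q
    have q' := q.mono (R' := fun a b => (a, b) ∈ E) fun _ _ h => h.1
    by_cases hv : v ∈ l
    · have hnd := q.nd
      obtain ⟨l1, l2, rfl, p1, p2⟩ := q'.split v hv
      have hw := p1.head_mem hwv
      obtain ⟨b, hb, h3, h4, h5, h6⟩ := get_mid hcyc huv he hvu p2
      exact two_mid hcyc huv he hr hvw hwu hwv hwu' h3 h4 h5 h6 (by grind)
    · have := sp_len hcyc (SP.cons hvw q' hv huv.symm) he
      simp at this
      omega
  exact Relation.ReflTransGen.head (show Necessary E (v, w) from ⟨hvw, n1⟩)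
    (.single (show Necessary E (w, u) from ⟨hwu, n2⟩))

/-- Paths entering the complement of `S` from `s`. -/
def InP (E : Set (V × V)) (S : Set V) (s w : V) : Prop :=
  Relation.ReflTransGen (fun x y => (x, y) ∈ E ∧ (x ∉ S ∨ x = s) ∧ y ∉ S) s w

/-- Paths leaving the complement of `S` to `t`. -/
def OutP (E : Set (V × V)) (S : Set V) (w t : V) : Prop :=
  Relation.ReflTransGen (fun x y => (x, y) ∈ E ∧ x ∉ S ∧ (y ∉ S ∨ y = t)) w t

theorem ear (hcyc : ∀ c : List V, IsCycle E c → c.length ≤ 3) {S : Set V}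
    (hS : ∀ x ∈ S, ∀ y ∈ S, x ≠ y → (x, y) ∈ E)
    (hS3 : ∀ x y, ∃ z ∈ S, z ≠ x ∧ z ≠ y)
    {s t w : V} (hs : s ∈ S) (ht : t ∈ S)
    (h1 : InP E S s w) (h2 : OutP E S w t) : s = t := by
  by_contra hst
  have h : Relation.ReflTransGen
      (fun x y => ((x, y) ∈ E \ {(s, t)}) ∧ (x ∉ S ∨ x = s)) s t := by
    refine Relation.ReflTransGen.trans (Relation.ReflTransGen.mono ?_ _ _ h1)
      (Relation.ReflTransGen.mono ?_ _ _ h2)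
    · rintro x y ⟨a, b, c⟩
      exact ⟨⟨a, by grind⟩, b⟩
    · rintro x y ⟨a, b, c⟩
      exact ⟨⟨a, by grind⟩, Or.inl b⟩
  obtain ⟨l, p⟩ := SP.exists_of_rtg h
  obtain ⟨z, hz, hzs, hzt⟩ := hS3 s t
  have hzl : z ∉ l := by
    intro hzl
    obtain ⟨y, hy⟩ := p.mem_rel z hzl
    grind
  have h3 := minus_len hst (p.mono (R' := fun a b => (a, b) ∈ E \ {(s, t)}) fun _ _ h => h.1)
  have q : SP (fun a b => (a, b) ∈ E) z t (z :: l) :=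
    .cons (hS z hz s hs hzs) (p.mono fun _ _ h => h.1.1) hzl hzt
  have := sp_len hcyc q (hS t ht z hz hzt.symm)
  simp at this
  omega

theorem no_tri (hconn : StronglyConnects E)
    (hcyc : ∀ c : List V, IsCycle E c → c.length ≤ 3)
    (hcut : ∀ w : V, ¬ IsCutVertex E w) {S : Set V}
    (hS : ∀ x ∈ S, ∀ y ∈ S, x ≠ y → (x, y) ∈ E)
    (hS3 : ∀ x y, ∃ z ∈ S, z ≠ x ∧ z ≠ y) (w0 : V) (hw0 : w0 ∉ S) : False := by
  obtain ⟨r, hr, -, -⟩ := hS3 w0 w0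
  have exIn : ∀ w, w ∉ S → ∃ s ∈ S, InP E S s w := by
    intro w
    induction hconn r w with
    | refl => exact fun h => absurd hr h
    | @tail x y _ hxy ih =>
      intro hy
      by_cases hx : x ∈ S
      · exact ⟨x, hx, .single ⟨hxy, Or.inr rfl, hy⟩⟩
      · obtain ⟨s, hs, h⟩ := ih hx
        exact ⟨s, hs, h.tail ⟨hxy, Or.inl hx, hy⟩⟩
  have exOut : ∀ w, w ∉ S → ∃ t ∈ S, OutP E S w t := by
    intro w
    induction hconn w r using Relation.ReflTransGen.head_induction_on with
    | refl => exact fun h => absurd hr h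
    | @head x y hxy _ ih =>
      intro hx
      by_cases hy : y ∈ S
      · exact ⟨y, hy, .single ⟨hxy, hx, Or.inr rfl⟩⟩
      · obtain ⟨s, hs, h⟩ := ih hy
        exact ⟨s, hs, Relation.ReflTransGen.head ⟨hxy, hx, Or.inl hy⟩ h⟩
  obtain ⟨s, hs, hsw⟩ := exIn w0 hw0
  obtain ⟨t, ht, hts, -⟩ := hS3 s s
  apply hcut s
  refine ⟨w0, t, by grind, hts, fun hp => ?_⟩
  have key : t ∉ S ∧ InP E S s t := by
    clear ht hts
    induction hp with
    | refl => exact ⟨hw0, hsw⟩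
    | @tail a b _ hab ih =>
      obtain ⟨ha, hsa⟩ := ih
      obtain ⟨-, hbs, hab | hba⟩ := hab
      · have hb : b ∉ S := fun hb =>
          hbs (ear hcyc hS hS3 hs hb hsa (.single ⟨hab, ha, Or.inr rfl⟩)).symm
        exact ⟨hb, hsa.tail ⟨hab, Or.inl ha, hb⟩⟩
      · obtain ⟨t', ht', hat'⟩ := exOut a ha
        have e1 := ear hcyc hS hS3 hs ht' hsa hat'
        have hb : b ∉ S := fun hb =>
          hbs ((ear hcyc hS hS3 hb ht' (.single ⟨hba, Or.inr rfl, ha⟩) hat').trans e1.symm)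
        obtain ⟨s', hs', hsb⟩ := exIn b hb
        have e2 := ear hcyc hS hS3 hs' ht' (hsb.tail ⟨hba, Or.inl hb, ha⟩) hat'
        have : s' = s := e2.trans e1.symm
        subst this
        exact ⟨hb, hsb⟩
  exact key.1 ht

theorem caseA [Fintype V] (hconn : StronglyConnects E)
    (hcyc : ∀ c : List V, IsCycle E c → c.length ≤ 3)
    (hcard : 4 ≤ Fintype.card V)
    (hcut : ∀ w : V, ¬ IsCutVertex E w) {u v : V}
    (huv : u ≠ v) (he : (u, v) ∈ E) (hvu : (v, u) ∈ E)
    (hr : StronglyConnects (E \ {(u, v)})) : Necessary E (v, u) := by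
  classical
  refine ⟨hvu, fun hr' => ?_⟩
  obtain ⟨l, p⟩ := SP.exists_of_rtg (hr u v)
  obtain ⟨l', p'⟩ := SP.exists_of_rtg (hr' v u)
  have h1 := minus_len huv p
  have h1' := minus_len huv.symm p'
  have h2 := sp_len hcyc (p.mono fun _ _ h => h.1) hvu
  have h2' := sp_len hcyc (p'.mono fun _ _ h => h.1) he
  obtain ⟨a, -, ⟨ha1, -⟩, ⟨ha2, -⟩, ha3, ha4⟩ := sp_two p (by omega)
  obtain ⟨b, -, ⟨hb1, -⟩, ⟨hb2, -⟩, hb3, hb4⟩ := sp_two p' (by omega)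
  have hab : a = b := by
    by_contra hab
    have q : SP (fun a b => (a, b) ∈ E) u b [u, a, v] :=
      .cons ha1 (.cons ha2 (.cons hb1 (.nil _) (by simp) hb3.symm) (by simpa using ha4) hab)
        (by simp [huv, ha3.symm]) hb4.symm
    have := sp_len hcyc q hb2
    simp at this
  subst hab
  obtain ⟨w0, hw0⟩ : ∃ w0, w0 ∉ ({u, a, v} : Finset V) := by
    by_contra! h
    have : Finset.univ ⊆ ({u, a, v} : Finset V) := fun x _ => h x
    have := Finset.card_le_card this
    have h3 : ({u, a, v} : Finset V).card ≤ 3 := Finset.card_le_three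
    rw [Finset.card_univ] at this
    omega
  refine no_tri hconn hcyc hcut (S := {u, a, v}) ?_ ?_ w0 (by simpa using hw0)
  · simp only [Set.mem_insert_iff, Set.mem_singleton_iff]
    rintro x (rfl | rfl | rfl) y (rfl | rfl | rfl) hxy <;> first | assumption | exact absurd rfl hxy
  · intro x y
    simp only [Set.mem_insert_iff, Set.mem_singleton_iff]
    by_cases h1 : u ≠ x ∧ u ≠ y
    · exact ⟨u, by simp, h1⟩
    by_cases h2 : a ≠ x ∧ a ≠ y
    · exact ⟨a, by simp, h2⟩
    exact ⟨v, by simp, by grind, by grind⟩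

end

/-- Every unsatisfied edge of `G` is necessary. -/
theorem unsatisfied_is_necessary {V : Type*} [Fintype V] (E : Set (V × V))
    (hconn : StronglyConnects E)
    (hcyc : ∀ c : List V, IsCycle E c → c.length ≤ 3)
    (hcard : 4 ≤ Fintype.card V)
    (hcut : ∀ w : V, ¬ IsCutVertex E w)
    (e : V × V) (he : Unsatisfied E e) :
    Necessary E e := by
  obtain ⟨u, v⟩ := e
  obtain ⟨he, hn⟩ := he
  refine ⟨he, fun hr => hn ?_⟩
  by_cases huv : u = v
  · subst huv; exact .refl
  by_cases hvu : (v, u) ∈ E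
  · exact .single (caseA hconn hcyc hcard hcut huv he hvu hr)
  · exact caseB hconn hcyc huv he hvu hr
end

section
/- A set S ⊆ E strongly connects G if and only if S contains every necessary edge of G and, for each unsatisfied edge e of G, S contains some redundant edge that provides a cycle for e. -/
open Relation

theorem aux_mono {V : Type*} {r p : V → V → Prop} {x y : V} (h : ReflTransGen r x y)
    (hrp : ∀ a b, r a b → p a b) : ReflTransGen p x y := by
  induction h with
  | refl => exact .refl
  | tail _ h ih => exact ih.tail (hrp _ _ h)

theorem aux_simple {V : Type*} (r : V → V → Prop) {x y : V} (h : ReflTransGen r x y) :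
    ∃ l : List V, List.IsChain r (x :: l) ∧ (x :: l).getLast (by simp) = y ∧ (x :: l).Nodup := by
  classical
  induction h using ReflTransGen.head_induction_on with
  | refl => exact ⟨[], by simp⟩
  | @head a c hac _ ih =>
    obtain ⟨l, h1, h2, h3⟩ := ih
    by_cases ha : a ∈ c :: l
    · obtain ⟨s, t, hst⟩ := List.append_of_mem ha
      refine ⟨t, ?_, ?_, ?_⟩
      · rw [hst] at h1
        exact h1.right_of_append
      · rw [← h2]
        simp only [hst]
        rw [List.getLast_append_of_ne_nil]
      · rw [hst] at h3
        exact h3.of_append_right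
    · refine ⟨c :: l, ?_, ?_, ?_⟩
      · exact List.IsChain.cons_cons hac h1
      · rw [List.getLast_cons (by simp)]; exact h2
      · exact List.nodup_cons.2 ⟨ha, h3⟩

theorem aux_of_chain {V : Type*} (r : V → V → Prop) {x y : V} (l : List V)
    (h : List.IsChain r (x :: l)) (hl : (x :: l).getLast (by simp) = y) : ReflTransGen r x y := by
  induction l generalizing x with
  | nil => simp at hl; subst hl; exact .refl
  | cons a l ih =>
    rw [List.isChain_cons_cons] at h
    rw [List.getLast_cons (by simp)] at hl
    exact .head h.1 (ih h.2 hl)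

/-- edges of a chain closed up -/
theorem aux_cyc {V : Type*} (E : Set (V × V)) (x : V) (l : List V) (z : V)
    (h : List.IsChain (fun a b => (a, b) ∈ E) (x :: l))
    (hz : ((x :: l).getLast (by simp), z) ∈ E) :
    ∀ e ∈ (x :: l).zip (l ++ [z]), e ∈ E := by
  induction l generalizing x with
  | nil => simpa using hz
  | cons a l ih =>
    rw [List.isChain_cons_cons] at h
    rw [List.getLast_cons (by simp)] at hz
    intro e he
    simp only [List.cons_append, List.zip_cons_cons, List.mem_cons] at he
    rcases he with rfl | he
    · exact h.1
    · exact ih a h.2 hz e he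

theorem aux_isCycle {V : Type*} (E : Set (V × V)) (x : V) (l : List V)
    (h : List.IsChain (fun a b => (a, b) ∈ E) (x :: l))
    (hz : ((x :: l).getLast (by simp), x) ∈ E) (hn : (x :: l).Nodup) : IsCycle E (x :: l) := by
  refine ⟨by simp, hn, ?_⟩
  intro e he
  apply aux_cyc E x l x h hz
  simpa [cycleEdges] using he

theorem aux_K2 {V : Type*} (E : Set (V × V))
    (hcyc : ∀ c : List V, IsCycle E c → c.length ≤ 3) (r : V → V → Prop)
    (hr : ∀ a b, r a b → (a, b) ∈ E) {p q : V} (hpq : p ≠ q) (he : (p, q) ∈ E)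
    (h : ReflTransGen r q p) : r q p ∨ ∃ x, x ≠ p ∧ x ≠ q ∧ r q x ∧ r x p := by
  obtain ⟨l, h1, h2, h3⟩ := aux_simple r h
  have hc := hcyc _ (aux_isCycle E q l (h1.imp (fun a b => hr a b)) (by rw [h2]; exact he) h3)
  match l, h1, h2, h3, hc with
  | [], h1, h2, h3, hc => simp at h2; exact absurd h2.symm hpq
  | [a], h1, h2, h3, hc => simp at h2; subst h2; left; simpa using h1
  | [a, b], h1, h2, h3, hc =>
    simp at h2; subst h2; right
    simp at h1 h3
    exact ⟨a, by tauto, by tauto, h1.1, h1.2⟩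
  | a :: b :: c :: l, h1, h2, h3, hc => simp at hc; omega

theorem aux_mem_chain {V : Type*} (r : V → V → Prop) (q : V) (hq : ∀ a b, r a b → b ≠ q) (x : V)
    (l : List V) (h : List.IsChain r (x :: l)) : q ∉ l := by
  induction l generalizing x with
  | nil => simp
  | cons a l ih =>
    rw [List.isChain_cons_cons] at h
    have := hq _ _ h.1
    have := ih a h.2
    simp; tauto

theorem aux_K {V : Type*} (E : Set (V × V))
    (hcyc : ∀ c : List V, IsCycle E c → c.length ≤ 3) (r : V → V → Prop)
    (hr : ∀ a b, r a b → (a, b) ∈ E) {p q s : V} (hq : ∀ a b, r a b → b ≠ q)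
    (hps : p ≠ s) (hqs : q ≠ s) (he : (p, q) ∈ E) (he' : (q, s) ∈ E)
    (h : ReflTransGen r s p) : r s p := by
  obtain ⟨l, h1, h2, h3⟩ := aux_simple r h
  have hm := aux_mem_chain r q hq s l h1
  have hc := hcyc _ (aux_isCycle E q (s :: l)
    (List.IsChain.cons_cons he' (h1.imp (fun a b => hr a b)))
    (by rw [List.getLast_cons (by simp), h2]; exact he)
    (List.nodup_cons.2 ⟨by simp; tauto, h3⟩))
  match l, h1, h2, h3, hc with
  | [], h1, h2, h3, hc => simp at h2; exact absurd h2.symm hps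
  | [a], h1, h2, h3, hc => simp at h2; subst h2; simpa using h1
  | a :: b :: l, h1, h2, h3, hc => simp at hc; omega

theorem aux_chain_avoid {V : Type*} (r : V → V → Prop) (u x : V) (l : List V)
    (h : List.IsChain r (x :: l)) (hu : u ∉ l) :
    List.IsChain (fun a b => r a b ∧ b ≠ u) (x :: l) := by
  induction l generalizing x with
  | nil => simp
  | cons a l ih =>
    rw [List.isChain_cons_cons] at h ⊢
    simp at hu
    exact ⟨⟨h.1, fun h => hu.1 h.symm⟩, ih a h.2 hu.2⟩

theorem aux_split {V : Type*} (r : V → V → Prop) {v w u : V} (hvu : v ≠ u) (huw : u ≠ w)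
    (h : ReflTransGen r v w) :
    ReflTransGen (fun a b => r a b ∧ b ≠ u) v w ∨
    (ReflTransGen (fun a b => r a b ∧ b ≠ w) v u ∧
      ReflTransGen (fun a b => r a b ∧ b ≠ v) u w) := by
  obtain ⟨l, h1, h2, h3⟩ := aux_simple r h
  by_cases hu : u ∈ l
  · right
    obtain ⟨s, t, rfl⟩ := List.append_of_mem hu
    have hlast : (u :: t).getLast (by simp) = w := by
      rw [← h2, List.getLast_cons (a := v) (l := s ++ u :: t) (by simp), List.getLast_append_of_ne_nil]
    have hwt : w ∈ t := by
      have : w ∈ u :: t := by rw [← hlast]; exact List.getLast_mem _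
      simp at this; rcases this with h | h
      · exact absurd h.symm huw
      · exact h
    constructor
    · apply aux_of_chain _ (s ++ [u])
      · apply aux_chain_avoid
        · have : v :: (s ++ u :: t) = (v :: (s ++ [u])) ++ t := by simp
          rw [this] at h1
          exact h1.left_of_append
        · intro hw
          simp only [List.mem_append, List.mem_singleton] at hw
          have h4 := (List.nodup_cons.1 h3).2
          rw [List.nodup_append] at h4
          rcases hw with hw | hw
          · exact h4.2.2 w hw w (by simp [hwt]) rfl
          · exact huw hw.symm
      · simp
    · apply aux_of_chain _ t
      · apply aux_chain_avoid
        · have : v :: (s ++ u :: t) = (v :: s) ++ (u :: t) := by simp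
          rw [this] at h1
          exact h1.right_of_append
        · intro hv
          exact (List.nodup_cons.1 h3).1 (by simp [hv])
      · exact hlast
  · left
    exact aux_of_chain _ l (aux_chain_avoid _ _ _ _ h1 hu) h2

/-- triangle a → b → c → a with (a,b) redundant -/
theorem aux_back {V : Type*} (E : Set (V × V))
    (hcyc : ∀ c : List V, IsCycle E c → c.length ≤ 3) {a b c : V} (hab : a ≠ b) (hbc : b ≠ c)
    (hac : a ≠ c) (e2 : (b, c) ∈ E) (e3 : (c, a) ∈ E)
    (hred : Redundant E (a, b)) :
    ((a, c) ∈ E ∨ ∃ x, x ≠ a ∧ x ≠ b ∧ x ≠ c ∧ (a, x) ∈ E ∧ (x, c) ∈ E) ∧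
    ((c, b) ∈ E ∨ ∃ x, x ≠ a ∧ x ≠ b ∧ x ≠ c ∧ (c, x) ∈ E ∧ (x, b) ∈ E) := by
  rcases aux_split _ hac hbc.symm (hred.2 a b) with h | ⟨h1, h2⟩
  · have := aux_K E hcyc _ (fun x y h => h.1.1) (fun x y h => h.2) hab.symm hac.symm e2 e3 h
    simp at this
  · constructor
    · rcases aux_K2 E hcyc _ (fun x y h => h.1.1) hac.symm e3 h1 with h | ⟨x, hx1, hx2, h, h'⟩
      · exact .inl h.1.1
      · exact .inr ⟨x, hx2, h.2, hx1, h.1.1, h'.1.1⟩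
    · rcases aux_K2 E hcyc _ (fun x y h => h.1.1) hbc e2 h2 with h | ⟨x, hx1, hx2, h, h'⟩
      · exact .inl h.1.1
      · exact .inr ⟨x, h.2, hx1, hx2, h.1.1, h'.1.1⟩

theorem aux_no4 {V : Type*} (E : Set (V × V))
    (hcyc : ∀ c : List V, IsCycle E c → c.length ≤ 3) (x y : V) (l : List V)
    (a b : V) (h : List.IsChain (fun a b => (a, b) ∈ E) (x :: y :: a :: b :: l))
    (hz : ((x :: y :: a :: b :: l).getLast (by simp), x) ∈ E)
    (hn : (x :: y :: a :: b :: l).Nodup) : False := by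
  have := hcyc _ (aux_isCycle E _ _ h hz hn)
  simp at this
  omega

/-- no complete triangle -/
theorem aux_K3 {V : Type*} [Fintype V] (E : Set (V × V))
    (hconn : StronglyConnects E)
    (hcyc : ∀ c : List V, IsCycle E c → c.length ≤ 3)
    (hcard : 4 ≤ Fintype.card V)
    (hcut : ∀ w : V, ¬ IsCutVertex E w)
    (u v w : V) (huv : u ≠ v) (hvw : v ≠ w) (huw : u ≠ w)
    (e1 : (u, v) ∈ E) (e2 : (v, w) ∈ E) (e3 : (w, u) ∈ E)
    (f1 : (v, u) ∈ E) (f2 : (w, v) ∈ E) (f3 : (u, w) ∈ E) : False := by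
  classical
  obtain ⟨z0, hz0⟩ : ∃ z, z ∉ ({u, v, w} : Finset V) := by
    by_contra hcon
    push Not at hcon
    have h1 : Fintype.card V ≤ ({u, v, w} : Finset V).card :=
      Finset.card_le_card (fun x _ => hcon x)
    have := Finset.card_le_three (a := u) (b := v) (c := w)
    omega
  set T : Finset V := {u, v, w} with hT
  have hcomp : ∀ a b, a ∈ T → b ∈ T → a ≠ b → ∃ c ∈ T, c ≠ a ∧ c ≠ b ∧ (b, c) ∈ E ∧ (c, a) ∈ E := by
    intro a b ha hb hab
    simp only [hT, Finset.mem_insert, Finset.mem_singleton] at ha hb ⊢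
    rcases ha with rfl | rfl | rfl <;> rcases hb with rfl | rfl | rfl <;>
      first
      | exact absurd rfl hab
      | exact ⟨u, by tauto⟩
      | exact ⟨v, by tauto⟩
      | exact ⟨w, by tauto⟩
  let Out : V → V → Prop := fun x y => (x, y) ∈ E ∧ x ∉ T ∧ y ∉ T
  let Entry : V → V → Prop := fun a x => ∃ z, (a, z) ∈ E ∧ z ∉ T ∧ ReflTransGen Out z x
  let Exit : V → V → Prop := fun x b => ∃ z, (z, b) ∈ E ∧ z ∉ T ∧ ReflTransGen Out x z
  have huT : u ∈ T := by simp [hT]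
  have hEn : ∀ x, x ∉ T → ∃ a ∈ T, Entry a x := by
    intro x
    induction hconn u x with
    | refl => intro h; exact absurd huT h
    | @tail b c _ hbc ih =>
      intro hc
      by_cases hb : b ∈ T
      · exact ⟨b, hb, c, hbc, hc, .refl⟩
      · obtain ⟨a, ha, z, h1, h2, h3⟩ := ih hb
        exact ⟨a, ha, z, h1, h2, h3.tail ⟨hbc, hb, hc⟩⟩
  have hEx : ∀ x, x ∉ T → ∃ a ∈ T, Exit x a := by
    intro x
    induction hconn x u using ReflTransGen.head_induction_on with
    | refl => intro h; exact absurd huT h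
    | @head c b hbc _ ih =>
      intro hc
      by_cases hb : b ∈ T
      · exact ⟨b, hb, c, hbc, hc, .refl⟩
      · obtain ⟨a, ha, z, h1, h2, h3⟩ := ih hb
        exact ⟨a, ha, z, h1, h2, h3.head ⟨hbc, hc, hb⟩⟩
  have hear : ∀ a b x, a ∈ T → b ∈ T → Entry a x → Exit x b → a = b := by
    rintro a b x ha hb ⟨z, h1, h2, h3⟩ ⟨z', h1', h2', h3'⟩
    by_contra hab
    obtain ⟨c, hc, hca, hcb, g1, g2⟩ := hcomp a b ha hb hab
    let r : V → V → Prop := fun x y => (x, y) ∈ E ∧ y ≠ c ∧ ¬ (x = a ∧ y = b)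
    have hOr : ∀ x y, Out x y → r x y := by
      rintro x y ⟨k1, k2, k3⟩
      exact ⟨k1, fun h => k3 (h ▸ hc), fun h => k2 (h.1 ▸ ha)⟩
    have hp : ReflTransGen r a b := by
      have k1 : r a z := ⟨h1, fun h => h2 (h ▸ hc), fun h => h2 (h.2 ▸ hb)⟩
      have k2 : r z' b := ⟨h1', fun h => hcb h.symm, fun h => h2' (h.1 ▸ ha)⟩
      exact ReflTransGen.head k1 ((aux_mono (h3.trans h3') hOr).tail k2)
    have := aux_K E hcyc r (fun x y h => h.1) (fun x y h => h.2.1) (Ne.symm hab) hca g1 g2 hp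
    exact this.2.2 ⟨rfl, rfl⟩
  obtain ⟨a0, ha0, hent⟩ := hEn z0 hz0
  obtain ⟨t, ht, hta, -⟩ : ∃ t ∈ T, t ≠ a0 ∧ True := by
    by_cases h : u = a0
    · exact ⟨v, by simp [hT], fun h' => huv (h.trans h'.symm), trivial⟩
    · exact ⟨u, huT, h, trivial⟩
  refine hcut a0 ⟨z0, t, fun h => hz0 (h ▸ ha0), hta, fun hpath => ?_⟩
  suffices t ∉ T ∧ Entry a0 t from this.1 ht
  clear ht hta
  induction hpath with
  | refl => exact ⟨hz0, hent⟩
  | @tail x y _ hxy ih =>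
    obtain ⟨hx, hxe⟩ := ih
    obtain ⟨-, hy, hE | hE⟩ := hxy
    · have hyT : y ∉ T := fun h => hy (hear a0 y x ha0 h hxe ⟨x, hE, hx, .refl⟩).symm
      obtain ⟨z, h1, h2, h3⟩ := hxe
      exact ⟨hyT, z, h1, h2, h3.tail ⟨hE, hx, hyT⟩⟩
    · obtain ⟨b, hb, hxb⟩ := hEx x hx
      have hab := hear a0 b x ha0 hb hxe hxb
      subst hab
      have hyT : y ∉ T := fun h => hy (hear y a0 x h ha0 ⟨x, hE, hx, .refl⟩ hxb)
      refine ⟨hyT, ?_⟩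
      obtain ⟨b, hb, hby⟩ := hEn y hyT
      obtain ⟨z, h1, h2, h3⟩ := hxb
      have := hear b a0 y hb ha0 hby ⟨z, h1, h2, h3.head ⟨hE, hyT, hx⟩⟩
      exact this ▸ hby

theorem aux_tri {V : Type*} [Fintype V] (E : Set (V × V))
    (hconn : StronglyConnects E)
    (hcyc : ∀ c : List V, IsCycle E c → c.length ≤ 3)
    (hcard : 4 ≤ Fintype.card V)
    (hcut : ∀ w : V, ¬ IsCutVertex E w)
    (u v w : V) (huv : u ≠ v) (hvw : v ≠ w) (huw : u ≠ w)
    (e1 : (u, v) ∈ E) (r2 : Redundant E (v, w)) (r3 : Redundant E (w, u)) : False := by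
  have e2 := r2.1
  have e3 := r3.1
  obtain ⟨b1, b2⟩ := aux_back E hcyc hvw huw.symm huv.symm e3 e1 r2
  obtain ⟨b3, -⟩ := aux_back E hcyc huw.symm huv hvw.symm e1 e2 r3
  have n4 := fun x y a b => aux_no4 E hcyc x y [] a b
  have n5 := fun x y a b c => aux_no4 E hcyc x y [c] a b
  have n6 := fun x y a b c d => aux_no4 E hcyc x y [c, d] a b
  simp at n4 n5 n6
  rcases b1 with b1 | ⟨x, x1, x2, x3, x4, x5⟩ <;> rcases b2 with b2 | ⟨y, y1, y2, y3, y4, y5⟩ <;>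
    rcases b3 with b3 | ⟨z, z1, z2, z3, z4, z5⟩
  · exact aux_K3 E hconn hcyc hcard hcut u v w huv hvw huw e1 e2 e3 b1 b3 b2
  · have := n4 v u w z; grind
  · have := n4 v u y w; grind
  · have := n5 v u y w z
    have := n4 u y v w
    grind
  · have := n4 v x u w; grind
  · have := n5 v x u w z
    have := n4 w x u v
    grind
  · have := n5 v x u y w
    have := n4 v x w u
    grind
  · have := n6 v x u y w z
    have := n4 u y v w
    have := n4 w x u v
    have := n4 v x w u
    clear n4 n5 n6
    by_cases hxy : x = y
    · subst hxy; grind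
    by_cases hxz : x = z
    · subst hxz; grind
    by_cases hyz : y = z
    · subst hyz; grind
    grind

/-- A set `S ⊆ E` strongly connects `G` iff it contains every
necessary edge and, for each unsatisfied edge, some redundant edge of `S`
provides a cycle for it. -/
theorem scss_characterization {V : Type*} [Fintype V] (E : Set (V × V))
    (hconn : StronglyConnects E)
    (hcyc : ∀ c : List V, IsCycle E c → c.length ≤ 3)
    (hcard : 4 ≤ Fintype.card V)
    (hcut : ∀ w : V, ¬ IsCutVertex E w)
    (S : Set (V × V)) (hS : S ⊆ E) :
    StronglyConnects S ↔
      (necessarySet E ⊆ S ∧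
        ∀ e : V × V, Unsatisfied E e →
          ∃ r : V × V, r ∈ S ∧ Redundant E r ∧ ProvidesCycle E r e) := by
  classical
  have hor : ∀ e, e ∈ E → Necessary E e ∨ Redundant E e := by
    intro e he
    by_cases h : StronglyConnects (E \ {e})
    · exact .inr ⟨he, h⟩
    · exact .inl ⟨he, h⟩
  constructor
  · intro hSC
    refine ⟨?_, ?_⟩
    · rintro e ⟨he, hne⟩
      by_contra heS
      apply hne
      intro a b
      refine aux_mono (hSC a b) ?_
      intro x y hxy
      exact ⟨hS hxy, fun h => heS (h ▸ hxy)⟩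
    · rintro ⟨u, v⟩ ⟨he, hun⟩
      have huv : u ≠ v := by
        rintro rfl
        exact hun .refl
      simp only at hun
      rcases aux_K2 E hcyc _ (fun a b h => hS h) huv he (hSC v u) with h | ⟨x, hxu, hxv, h1, h2⟩
      · rcases hor _ (hS h) with hn | hr
        · exact (hun (ReflTransGen.single hn)).elim
        · exact ⟨_, h, hr, ReflTransGen.single (.inr rfl)⟩
      · rcases hor _ (hS h1) with n1 | r1 <;> rcases hor _ (hS h2) with n2 | r2
        · exact (hun (ReflTransGen.head n1 (ReflTransGen.single n2))).elim
        · exact ⟨_, h2, r2, (ReflTransGen.single (.inl n1)).tail (.inr rfl)⟩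
        · exact ⟨_, h1, r1, (ReflTransGen.single (.inr rfl)).tail (.inl n2)⟩
        · exact (aux_tri E hconn hcyc hcard hcut u v x huv hxv.symm hxu.symm he r1 r2).elim
  · rintro ⟨hN, hU⟩
    have hrev : ∀ a b, (a, b) ∈ E → ReflTransGen (fun a b => (a, b) ∈ S) b a := by
      intro a b hab
      by_cases h : ReflTransGen (fun a b => Necessary E (a, b)) b a
      · exact aux_mono h (fun x y hxy => hN hxy)
      · obtain ⟨r, hr, -, hp⟩ := hU (a, b) ⟨hab, h⟩
        refine aux_mono hp ?_
        rintro x y (hxy | hxy)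
        · exact hN hxy
        · exact hxy ▸ hr
    intro a b
    induction hconn b a with
    | refl => exact .refl
    | tail _ hbc ih => exact (hrev _ _ hbc).trans ih
end

section
/- There is no cycle in the underlying undirected graph of G all of whose edges come from unsatisfied edges of G; equivalently, the set of unsatisfied edges forms a forest in the underlying undirected graph. -/
/-- The undirected graph on `V` whose edges are the unsatisfied edges of `G`. -/
def unsatGraph {V : Type*} (E : Set (V × V)) : SimpleGraph V where
  Adj a b := a ≠ b ∧ (Unsatisfied E (a, b) ∨ Unsatisfied E (b, a))
  symm := ⟨fun a b h => ⟨Ne.symm h.1, h.2.symm⟩⟩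
  loopless := ⟨fun a h => h.1 rfl⟩

open Relation

/-- Every reachability statement is witnessed by a simple path. -/
theorem exists_simple_path {V : Type*} {r : V → V → Prop} {x y : V}
    (h : ReflTransGen r x y) :
    ∃ l : List V, (x :: l).Nodup ∧ List.IsChain r (x :: l) ∧ (x :: l).getLast? = some y := by
  classical
  induction h using ReflTransGen.head_induction_on with
  | refl => exact ⟨[], by simp⟩
  | @head a c hac _ ih =>
    obtain ⟨l, hn, hc, hl⟩ := ih
    by_cases ha : a ∈ c :: l
    · obtain ⟨s, t, hst⟩ := List.append_of_mem ha
      rw [hst] at hn hc hl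
      refine ⟨t, (List.nodup_append.1 hn).2.1, (List.isChain_append.1 hc).2.1, ?_⟩
      simpa [List.getLast?_append] using hl
    · exact ⟨c :: l, List.nodup_cons.2 ⟨ha, hn⟩, List.isChain_cons_cons.2 ⟨hac, hc⟩, by
        simpa [List.getLast?_cons_cons] using hl⟩

theorem zip_mem_edge {V : Type*} {E : Set (V × V)} (z : V) : ∀ (l : List V) (x : V),
    List.IsChain (fun a b => (a, b) ∈ E) (x :: l) →
    (∀ y, (x :: l).getLast? = some y → (y, z) ∈ E) →
    ∀ e ∈ (x :: l).zip (l ++ [z]), e ∈ E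
  | [], x, _, h2, e, he => by
    simp at he
    subst he
    exact h2 x (by simp)
  | b :: l, x, h1, h2, e, he => by
    rw [List.isChain_cons_cons] at h1
    simp only [List.cons_append, List.zip_cons_cons, List.mem_cons] at he
    rcases he with rfl | he
    · exact h1.1
    · exact zip_mem_edge z l b h1.2 (fun y hy => h2 y (by simpa [List.getLast?_cons_cons] using hy))
        e (by simpa using he)

theorem cycle_bound {V : Type*} {E : Set (V × V)}
    (hcyc : ∀ c : List V, IsCycle E c → c.length ≤ 3) {x y : V} {l : List V}
    (hn : (x :: l).Nodup) (hc : List.IsChain (fun a b => (a, b) ∈ E) (x :: l))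
    (hl : (x :: l).getLast? = some y) (hyx : (y, x) ∈ E) : l.length ≤ 2 := by
  have := hcyc (x :: l) ⟨by simp, hn, by
    intro e he
    refine zip_mem_edge x l x hc ?_ e (by simpa [cycleEdges] using he)
    intro y' hy'
    rw [hl] at hy'
    cases hy'
    exact hyx⟩
  simp only [List.length_cons] at this
  omega

/-- A return path for an edge has length at most two. -/
theorem short_return {V : Type*} {E : Set (V × V)}
    (hcyc : ∀ c : List V, IsCycle E c → c.length ≤ 3) {p : V → Prop} {x y : V}
    (h : ReflTransGen (fun a b => (a, b) ∈ E ∧ p a ∧ p b) x y) (hyx : (y, x) ∈ E) (hne : x ≠ y) :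
    (x, y) ∈ E ∨ ∃ z, z ≠ x ∧ z ≠ y ∧ p z ∧ (x, z) ∈ E ∧ (z, y) ∈ E := by
  obtain ⟨l, hn, hc, hl⟩ := exists_simple_path h
  have hb := cycle_bound hcyc hn (hc.imp (fun _ _ h => h.1)) hl hyx
  match l, hn, hc, hl, hb with
  | [], _, _, hl, _ => simp at hl; exact absurd hl hne
  | [a], _, hc, hl, _ =>
    simp at hl hc
    subst hl
    exact Or.inl hc.1
  | [a, b], hn, hc, hl, _ =>
    simp at hl hc hn
    subst hl
    exact Or.inr ⟨a, fun h => hn.1.1 h.symm, hn.2, hc.1.2.2, hc.1.1, hc.2.1⟩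
  | _ :: _ :: _ :: _, _, _, _, hb => simp at hb

/-- Directed cycles of length four do not exist. -/
theorem no_four {V : Type*} {E : Set (V × V)}
    (hcyc : ∀ c : List V, IsCycle E c → c.length ≤ 3) {l : List V} {x y : V}
    (hn : (x :: l).Nodup) (hc : List.IsChain (fun a b => (a, b) ∈ E) (x :: l))
    (hl : (x :: l).getLast? = some y) (hyx : (y, x) ∈ E) (hlen : 3 ≤ l.length) : False := by
  have := cycle_bound hcyc hn hc hl hyx
  omega

theorem chain_reach {V : Type*} {r : V → V → Prop} : ∀ (l : List V) (x y : V),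
    List.IsChain r (x :: l) → (x :: l).getLast? = some y →
    ReflTransGen (fun a b => r a b ∧ a ∈ x :: l ∧ b ∈ x :: l) x y
  | [], x, y, _, hl => by
    simp at hl
    subst hl
    exact .refl
  | b :: l, x, y, hc, hl => by
    rw [List.isChain_cons_cons] at hc
    refine .head ⟨hc.1, by simp, by simp⟩ (ReflTransGen.mono ?_ _ _ (chain_reach l b y hc.2
      (by simpa [List.getLast?_cons_cons] using hl)))
    rintro c d ⟨h1, h2, h3⟩
    exact ⟨h1, List.mem_cons_of_mem _ h2, List.mem_cons_of_mem _ h3⟩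

/-- If `a → b → c → a` and `(a, b)` is bypassed, then the bypass runs through `c`. -/
theorem bypass {V : Type*} {E : Set (V × V)}
    (hcyc : ∀ c : List V, IsCycle E c → c.length ≤ 3) {a b c : V}
    (hab : a ≠ b) (hbc : b ≠ c) (hca : c ≠ a)
    (h : ReflTransGen (fun x y => (x, y) ∈ E \ {(a, b)}) a b)
    (ebc : (b, c) ∈ E) (eca : (c, a) ∈ E) :
    ReflTransGen (fun x y => (x, y) ∈ E ∧ x ≠ b ∧ y ≠ b) a c ∧
    ReflTransGen (fun x y => (x, y) ∈ E ∧ x ≠ a ∧ y ≠ a) c b := by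
  classical
  obtain ⟨l, hn, hc, hl⟩ := exists_simple_path h
  by_cases hcl : c ∈ l
  · obtain ⟨s, t, rfl⟩ := List.append_of_mem hcl
    have hc' : List.IsChain (fun x y => (x, y) ∈ E) (a :: (s ++ c :: t)) :=
      hc.imp (fun _ _ h => h.1)
    have hl' : (c :: t).getLast? = some b := by
      have : a :: (s ++ c :: t) = (a :: s) ++ (c :: t) := by simp
      rw [this, List.getLast?_append] at hl
      simpa using hl
    have hbt : b ∈ t := by
      have := List.mem_of_getLast? hl'
      simp only [List.mem_cons] at this
      exact this.resolve_left hbc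
    have e1 : a :: (s ++ c :: t) = (a :: s) ++ (c :: t) := by simp
    have e2 : a :: (s ++ c :: t) = (a :: (s ++ [c])) ++ t := by simp
    have n1 := hn
    rw [e1, List.nodup_append] at n1
    have n2 := hn
    rw [e2, List.nodup_append] at n2
    have c1 := hc'
    rw [e1, List.isChain_append] at c1
    have c2 := hc'
    rw [e2, List.isChain_append] at c2
    constructor
    · refine ReflTransGen.mono ?_ _ _ (chain_reach (s ++ [c]) a c c2.1 (by
        rw [← List.cons_append, List.getLast?_append]; simp))
      rintro x y ⟨h1, h2, h3⟩
      exact ⟨h1, n2.2.2 x h2 b hbt, n2.2.2 y h3 b hbt⟩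
    · refine ReflTransGen.mono ?_ _ _ (chain_reach t c b c1.2.1 hl')
      rintro x y ⟨h1, h2, h3⟩
      exact ⟨h1, (n1.2.2 a (by simp) x h2).symm, (n1.2.2 a (by simp) y h3).symm⟩
  · exfalso
    have hlen : 2 ≤ l.length := by
      match l, hc, hl with
      | [], _, hl => simp at hl; exact absurd hl hab
      | [z], hc, hl =>
        simp at hl hc
        subst hl
        simp at hc
      | _ :: _ :: _, _, _ => simp
    refine no_four hcyc (x := a) (l := l ++ [c]) (y := c) ?_ ?_ ?_ eca (by simp; omega)
    · rw [← List.cons_append, List.nodup_append]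
      refine ⟨hn, by simp, ?_⟩
      rintro x hx y hy rfl
      simp only [List.mem_singleton] at hy
      subst hy
      rcases List.mem_cons.1 hx with h | h
      · exact hca h
      · exact hcl h
    · rw [← List.cons_append, List.isChain_append]
      refine ⟨hc.imp (fun _ _ h => h.1), by simp, ?_⟩
      intro x hx y hy
      rw [hl] at hx
      simp at hx hy
      subst hx; subst hy
      exact ebc
    · rw [← List.cons_append, List.getLast?_append]; simp

theorem strong_of_bypass {V : Type*} {E : Set (V × V)} (hconn : StronglyConnects E) {a b : V}
    (h : ReflTransGen (fun x y => (x, y) ∈ E \ {(a, b)}) a b) :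
    StronglyConnects (E \ {(a, b)}) := by
  intro u v
  have := hconn u v
  induction this with
  | refl => exact .refl
  | @tail c d _ hcd ih =>
    by_cases he : (c, d) = (a, b)
    · cases he
      exact ih.trans h
    · exact ih.tail ⟨hcd, he⟩

theorem bypass_of_not_nec {V : Type*} {E : Set (V × V)} {a b : V} (hab : (a, b) ∈ E)
    (h : ¬ Necessary E (a, b)) :
    ReflTransGen (fun x y => (x, y) ∈ E \ {(a, b)}) a b := by
  have : StronglyConnects (E \ {(a, b)}) := by
    by_contra h'
    exact h ⟨hab, h'⟩
  exact this a b

/-- There is no fully bidirected triangle. -/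
theorem no_bidirected {V : Type*} [Fintype V] {E : Set (V × V)}
    (hconn : StronglyConnects E)
    (hcyc : ∀ c : List V, IsCycle E c → c.length ≤ 3)
    (hcard : 4 ≤ Fintype.card V)
    (hcut : ∀ w : V, ¬ IsCutVertex E w) {a b c : V}
    (hab : a ≠ b) (hbc : b ≠ c) (hca : c ≠ a)
    (e1 : (a, b) ∈ E) (e2 : (b, c) ∈ E) (e3 : (c, a) ∈ E)
    (e4 : (b, a) ∈ E) (e5 : (c, b) ∈ E) (e6 : (a, c) ∈ E) : False := by
  classical
  set T : Finset V := {a, b, c} with hT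
  have memT : ∀ x, x ∈ T ↔ x = a ∨ x = b ∨ x = c := by intro x; simp [hT]
  obtain ⟨d, hd⟩ : ∃ d, d ∉ T := by
    by_contra! hall
    have h1 : Finset.univ ⊆ T := fun x _ => hall x
    have h2 := Finset.card_le_card h1
    have h3 : T.card ≤ 3 := Finset.card_le_three
    rw [Finset.card_univ] at h2
    omega
  have third : ∀ r s, r ∈ T → s ∈ T → r ≠ s → ∃ t ∈ T, t ≠ r ∧ t ≠ s ∧ (s, t) ∈ E ∧ (t, r) ∈ E := by
    intro r s hr hs hrs
    rw [memT] at hr hs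
    rcases hr with rfl | rfl | rfl <;> rcases hs with rfl | rfl | rfl <;>
      first
      | exact absurd rfl hrs
      | exact ⟨a, by simp [hT], by grind, by grind, by assumption, by assumption⟩
      | exact ⟨b, by simp [hT], by grind, by grind, by assumption, by assumption⟩
      | exact ⟨c, by simp [hT], by grind, by grind, by assumption, by assumption⟩
  set R : V → V → Prop := fun x y => (x, y) ∈ E ∧ x ∉ T ∧ y ∉ T with hR
  have bad : ∀ r s x y, r ∈ T → s ∈ T → r ≠ s → x ∉ T → (r, x) ∈ E → ReflTransGen R x y →
      (y, s) ∈ E → False := by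
    intro r s x y hr hs hrs hx hrx hxy hys
    obtain ⟨t, ht, htr, hts, est, etr⟩ := third r s hr hs hrs
    obtain ⟨l, hn, hc, hl⟩ := exists_simple_path hxy
    have hout : ∀ z ∈ x :: l, z ∉ T := by
      have : ∀ (l : List V) (x : V), x ∉ T → List.IsChain R (x :: l) → ∀ z ∈ x :: l, z ∉ T := by
        intro l
        induction l with
        | nil => intro x hx _ z hz; simp at hz; subst hz; exact hx
        | cons b l ih =>
          intro x hx hc z hz
          rw [List.isChain_cons_cons] at hc
          rcases List.mem_cons.1 hz with rfl | hz
          · exact hx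
          · exact ih b hc.1.2.2 hc.2 z hz
      exact this l x hx hc
    refine no_four hcyc (x := x) (l := l ++ [s, t, r]) (y := r) ?_ ?_ ?_ hrx (by simp)
    · rw [← List.cons_append, List.nodup_append]
      refine ⟨hn, by simp; grind, ?_⟩
      rintro z hz w hw rfl
      apply hout z hz
      simp at hw
      rcases hw with rfl | rfl | rfl <;> assumption
    · rw [← List.cons_append, List.isChain_append]
      refine ⟨hc.imp (fun _ _ h => h.1), by simp [est, etr], ?_⟩
      intro z hz w hw
      rw [hl] at hz
      simp at hz hw
      subst hz; subst hw
      exact hys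
    · rw [← List.cons_append, List.getLast?_append]; simp
  have exits : ∀ x, x ∉ T → ∃ t ∈ T, ∃ y, ReflTransGen R x y ∧ (y, t) ∈ E := by
    intro x
    have := hconn x a
    induction this using ReflTransGen.head_induction_on with
    | refl => intro h; exact absurd (by simp [hT]) h
    | @head p q hpq _ ih =>
      intro hp
      by_cases hq : q ∈ T
      · exact ⟨q, hq, p, .refl, hpq⟩
      · obtain ⟨t, ht, y, hy, hyt⟩ := ih hq
        exact ⟨t, ht, y, hy.head ⟨hpq, hp, hq⟩, hyt⟩
  have enters : ∀ x, x ∉ T → ∃ t ∈ T, ∃ y, y ∉ T ∧ (t, y) ∈ E ∧ ReflTransGen R y x := by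
    intro x
    have := hconn a x
    induction this with
    | refl => intro h; exact absurd (by simp [hT]) h
    | @tail p q _ hpq ih =>
      intro hq
      by_cases hp : p ∈ T
      · exact ⟨p, hp, q, hq, hpq, .refl⟩
      · obtain ⟨t, ht, y, hyT, hty, hy⟩ := ih hp
        exact ⟨t, ht, y, hyT, hty, hy.tail ⟨hpq, hp, hq⟩⟩
  obtain ⟨t, ht, y0, hy0, hy0t⟩ := exits d hd
  -- the exit vertex is unique
  have uniq : ∀ x s y y', x ∉ T → s ∈ T → ReflTransGen R x y → (y, t) ∈ E →
      ReflTransGen R x y' → (y', s) ∈ E → s = t := by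
    intro x s y y' hx hs h1 h2 h3 h4
    obtain ⟨r, hr, z, hz, hrz, hzx⟩ := enters x hx
    by_contra hst
    by_cases hrt : r = t
    · exact bad r s z y' hr hs (by grind) hz hrz (hzx.trans h3) h4
    · exact bad r t z y hr ht hrt hz hrz (hzx.trans h1) h2
  obtain ⟨s, hs, hst⟩ : ∃ s ∈ T, s ≠ t := by
    by_cases h : t = a
    · exact ⟨b, by simp [hT], by grind⟩
    · exact ⟨a, by simp [hT], by grind⟩
  apply hcut t
  refine ⟨d, s, by rintro rfl; exact hd ht, hst, ?_⟩
  intro hpath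
  have key : s ∉ T ∧ ∃ y, ReflTransGen R s y ∧ (y, t) ∈ E := by
    clear hst hs
    induction hpath with
    | refl => exact ⟨hd, y0, hy0, hy0t⟩
    | @tail p q _ hpq ih =>
      obtain ⟨hp, y, hy, hyt⟩ := ih
      obtain ⟨-, hqt, hE⟩ := hpq
      by_cases hq : q ∈ T
      · exfalso
        rcases hE with hE | hE
        · exact hqt (uniq p q y p hp hq hy hyt .refl hE)
        · exact bad q t p y hq ht hqt hp hE hy hyt
      · refine ⟨hq, ?_⟩
        rcases hE with hE | hE
        · obtain ⟨s', hs', y', hy', hys'⟩ := exits q hq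
          have := uniq p s' y y' hp hs' hy hyt (hy'.head ⟨hE, hp, hq⟩) hys'
          subst this
          exact ⟨y', hy', hys'⟩
        · exact ⟨y, hy.head ⟨hE, hq, hp⟩, hyt⟩
  exact key.1 hs

/-- A directed triangle does not contain two redundant edges. -/
theorem no_two_redundant {V : Type*} [Fintype V] {E : Set (V × V)}
    (hconn : StronglyConnects E)
    (hcyc : ∀ c : List V, IsCycle E c → c.length ≤ 3)
    (hcard : 4 ≤ Fintype.card V)
    (hcut : ∀ w : V, ¬ IsCutVertex E w) {a b c : V}
    (hab : a ≠ b) (hbc : b ≠ c) (hca : c ≠ a)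
    (eab : (a, b) ∈ E) (ebc : (b, c) ∈ E) (eca : (c, a) ∈ E)
    (nab : ¬ Necessary E (a, b)) (nbc : ¬ Necessary E (b, c)) : False := by
  obtain ⟨P1, P2⟩ := bypass hcyc hab hbc hca (bypass_of_not_nec eab nab) ebc eca
  obtain ⟨P3, -⟩ := bypass hcyc hbc hca hab (bypass_of_not_nec ebc nbc) eca eab
  have Q1 := short_return (p := fun x => x ≠ b) hcyc P1 eca hca.symm
  have Q2 := short_return (p := fun x => x ≠ a) hcyc P2 ebc hbc.symm
  have Q3 := short_return (p := fun x => x ≠ c) hcyc P3 eab hab.symm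
  have ncy : ∀ (x y z w : V), x ≠ y → x ≠ z → x ≠ w → y ≠ z → y ≠ w → z ≠ w →
      (x, y) ∈ E → (y, z) ∈ E → (z, w) ∈ E → (w, x) ∈ E → False := by
    intro x y z w h1 h2 h3 h4 h5 h6 f1 f2 f3 f4
    exact no_four hcyc (x := x) (l := [y, z, w]) (y := w) (by simp; grind) (by simp [*])
      (by simp) f4 (by simp)
  rcases Q1 with a1 | ⟨p, p1, p2, p3, p4, p5⟩ <;> rcases Q2 with a2 | ⟨q, q1, q2, q3, q4, q5⟩ <;>
    rcases Q3 with a3 | ⟨r, r1, r2, r3, r4, r5⟩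
  · exact no_bidirected hconn hcyc hcard hcut hab hbc hca eab ebc eca a3 a2 a1
  · exact ncy a c b r (by grind) (by grind) (by grind) (by grind) (by grind) (by grind) a1 a2 r4 r5
  · exact ncy a c q b (by grind) (by grind) (by grind) (by grind) (by grind) (by grind) a1 q4 q5 a3
  · by_cases hqr : q = r
    · subst hqr
      exact ncy c q a b (by grind) (by grind) (by grind) (by grind) (by grind) (by grind) q4 r5 eab ebc
    · exact no_four hcyc (x := a) (l := [c, q, b, r]) (y := r) (by simp; grind) (by simp [*])
        (by simp) r5 (by simp)
  · exact ncy a p c b (by grind) (by grind) (by grind) (by grind) (by grind) (by grind) p4 p5 a2 a3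
  · by_cases hpr : p = r
    · subst hpr
      exact ncy b p c a (by grind) (by grind) (by grind) (by grind) (by grind) (by grind) r4 p5 eca eab
    · exact no_four hcyc (x := a) (l := [p, c, b, r]) (y := r) (by simp; grind) (by simp [*])
        (by simp) r5 (by simp)
  · by_cases hpq : p = q
    · subst hpq
      exact ncy a p b c (by grind) (by grind) (by grind) (by grind) (by grind) (by grind) p4 q5 ebc eca
    · exact no_four hcyc (x := a) (l := [p, c, q, b]) (y := b) (by simp; grind) (by simp [*])
        (by simp) a3 (by simp)
  · by_cases hqr : q = r
    · subst hqr
      exact ncy c q a b (by grind) (by grind) (by grind) (by grind) (by grind) (by grind) q4 r5 eab ebc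
    by_cases hpr : p = r
    · subst hpr
      exact ncy b p c a (by grind) (by grind) (by grind) (by grind) (by grind) (by grind) r4 p5 eca eab
    by_cases hpq : p = q
    · subst hpq
      exact ncy a p b c (by grind) (by grind) (by grind) (by grind) (by grind) (by grind) p4 q5 ebc eca
    · exact no_four hcyc (x := a) (l := [p, c, q, b, r]) (y := r) (by simp; grind) (by simp [*])
        (by simp) r5 (by simp)

theorem return_path {V : Type*} {E : Set (V × V)} (hconn : StronglyConnects E)
    (hcyc : ∀ c : List V, IsCycle E c → c.length ≤ 3) {a b : V} (hab : a ≠ b)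
    (eab : (a, b) ∈ E) :
    (b, a) ∈ E ∨ ∃ z, z ≠ b ∧ z ≠ a ∧ (b, z) ∈ E ∧ (z, a) ∈ E := by
  have := short_return (p := fun _ => True) hcyc (ReflTransGen.mono (fun _ _ h => by simpa using h) _ _ (hconn b a))
    eab hab.symm
  simpa using this

theorem Unsatisfied.ne {V : Type*} {E : Set (V × V)} {a b : V} (h : Unsatisfied E (a, b)) :
    a ≠ b := by
  rintro rfl
  exact h.2 .refl

/-- Unsatisfied edges are necessary. -/
theorem unsat_necessary {V : Type*} [Fintype V] {E : Set (V × V)}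
    (hconn : StronglyConnects E)
    (hcyc : ∀ c : List V, IsCycle E c → c.length ≤ 3)
    (hcard : 4 ≤ Fintype.card V)
    (hcut : ∀ w : V, ¬ IsCutVertex E w) {a b : V} (h : Unsatisfied E (a, b)) :
    Necessary E (a, b) := by
  by_contra hn
  have hab := h.ne
  obtain ⟨eab, hun⟩ := h
  have tri : ∀ c, c ≠ b → c ≠ a → (b, c) ∈ E → (c, a) ∈ E → False := by
    intro c hcb hca ebc eca
    by_cases nbc : Necessary E (b, c)
    · by_cases nca : Necessary E (c, a)
      · exact hun (ReflTransGen.head nbc (ReflTransGen.single nca))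
      · exact no_two_redundant hconn hcyc hcard hcut hca hab hcb.symm eca eab ebc nca hn
    · exact no_two_redundant hconn hcyc hcard hcut hab hcb.symm hca eab ebc eca hn nbc
  rcases return_path hconn hcyc hab eab with eba | ⟨c, h1, h2, h3, h4⟩
  · have nba : ¬ Necessary E (b, a) := fun h => hun (.single h)
    obtain ⟨l, hnd, hc, hl⟩ := exists_simple_path (bypass_of_not_nec eba nba)
    have hb := cycle_bound hcyc hnd (hc.imp (fun _ _ h => h.1)) hl eab
    match l, hnd, hc, hl, hb with
    | [], _, _, hl, _ => simp at hl; exact hab hl.symm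
    | [z], _, hc, hl, _ =>
      simp at hl hc
      subst hl
      simp at hc
    | [z, w], hnd, hc, hl, _ =>
      simp at hl hc hnd
      subst hl
      exact tri z (fun h => hnd.1.1 h.symm) hnd.2 hc.1.1 hc.2.1
    | _ :: _ :: _ :: _, _, _, _, hb => simp at hb
  · exact tri c h1 h2 h3 h4

/-- An unsatisfied edge is a bridge of the graph of unsatisfied edges. -/
theorem unsat_bridge {V : Type*} [Fintype V] {E : Set (V × V)}
    (hconn : StronglyConnects E)
    (hcyc : ∀ c : List V, IsCycle E c → c.length ≤ 3)
    (hcard : 4 ≤ Fintype.card V)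
    (hcut : ∀ w : V, ¬ IsCutVertex E w) {u v : V} (h : Unsatisfied E (u, v)) :
    ¬ ((unsatGraph E).deleteEdges {s(u, v)}).Reachable u v := by
  have huv := h.ne
  have hnec := unsat_necessary hconn hcyc hcard hcut h
  set S : Set V := {x | ReflTransGen (fun x y => (x, y) ∈ E \ {(u, v)}) u x} with hS
  have hvS : v ∉ S := fun hv => hnec.2 (strong_of_bypass hconn hv)
  have step : ∀ x y, x ∈ S → (x, y) ∈ E → (x, y) ≠ (u, v) → y ∈ S :=
    fun x y hx hxy hne => ReflTransGen.tail hx ⟨hxy, hne⟩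
  have closed : ∀ x y, x ∈ S → ((unsatGraph E).deleteEdges {s(u, v)}).Adj x y → y ∈ S := by
    intro x y hx hadj
    by_contra hy
    rw [SimpleGraph.deleteEdges_adj] at hadj
    obtain ⟨⟨hxy, hor⟩, hne⟩ := hadj
    have hne1 : (x, y) ≠ (u, v) := by
      rintro heq
      cases heq
      exact hne rfl
    rcases hor with hor | hor
    · exact hy (step x y hx hor.1 hne1)
    have nyx := unsat_necessary hconn hcyc hcard hcut hor
    rcases return_path hconn hcyc hxy.symm hor.1 with e | ⟨w, hwx, hwy, exw, ewy⟩
    · exact hy (step x y hx e hne1)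
    by_cases h1 : (x, w) = (u, v)
    · cases h1
      -- triangle `u → v → y → u`, the edge `(v, y)` is redundant
      have nwy : ¬ Necessary E (v, y) := fun hh => h.2 (ReflTransGen.head hh (ReflTransGen.single nyx))
      have := (bypass hcyc hwy hxy.symm hwx.symm (bypass_of_not_nec ewy nwy) hor.1 exw).2
      apply hy
      refine ReflTransGen.mono ?_ _ _ this
      rintro p q ⟨hpq, hp, hq⟩
      refine ⟨hpq, ?_⟩
      rintro heq
      cases heq
      exact hq rfl
    · have hw := step x w hx exw h1
      by_cases h2 : (w, y) = (u, v)
      · cases h2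
        -- triangle `u → v → x → u`, the edge `(x, u)` is redundant
        have nxw : ¬ Necessary E (x, u) := fun hh => h.2 (ReflTransGen.head nyx (ReflTransGen.single hh))
        have := (bypass hcyc hwx.symm huv hxy.symm (bypass_of_not_nec exw nxw) ewy hor.1).1
        apply hy
        refine ReflTransGen.trans hx (ReflTransGen.mono ?_ _ _ this)
        rintro p q ⟨hpq, hp, hq⟩
        refine ⟨hpq, ?_⟩
        rintro heq
        cases heq
        exact hp rfl
      · exact hy (step w y hw ewy h2)
  intro hr
  rw [SimpleGraph.reachable_iff_reflTransGen] at hr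
  have : v ∈ S := by
    have gen : ∀ z, ReflTransGen ((unsatGraph E).deleteEdges {s(u, v)}).Adj u z → z ∈ S := by
      intro z hz
      induction hz with
      | refl => exact ReflTransGen.refl
      | tail _ hpq ih => exact closed _ _ ih hpq
    exact gen v hr
  exact hvS this

/-- The unsatisfied edges of `G` form a forest in the underlying
undirected graph: there is no undirected cycle all of whose edges come from
unsatisfied edges. -/
theorem unsatisfied_edges_acyclic {V : Type*} [Fintype V] (E : Set (V × V))
    (hconn : StronglyConnects E)
    (hcyc : ∀ c : List V, IsCycle E c → c.length ≤ 3)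
    (hcard : 4 ≤ Fintype.card V)
    (hcut : ∀ w : V, ¬ IsCutVertex E w) :
    (unsatGraph E).IsAcyclic := by
  rw [SimpleGraph.isAcyclic_iff_forall_adj_isBridge]
  rintro a b ⟨hab, h | h⟩
  · rw [SimpleGraph.isBridge_iff]
    exact unsat_bridge hconn hcyc hcard hcut h
  · rw [Sym2.eq_swap, SimpleGraph.isBridge_iff]
    exact unsat_bridge hconn hcyc hcard hcut h
end

section
/- Let H be a bipartite graph with parts A and B, both nonempty and with no isolated vertices, and let D be the directed graph built from H with root r. A set F' of edges of H is an edge cover of H if and only if the set of directed edges {a→b : {a,b} ∈ F'} together with all the root edges {r→a : a ∈ A} ∪ {b→r : b ∈ B} strongly connects D. Consequently, the minimum size of an edge cover of H equals the minimum size of a strongly connecting edge set of D minus (|A| + |B|). -/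
/-- Vertex set of the digraph `D` built from a bipartite graph with parts `α`, `β`:
the two parts together with a new root vertex. -/
abbrev BVert (α β : Type*) := α ⊕ β ⊕ Unit

/-- The root vertex of `D`. -/
def broot (α β : Type*) : BVert α β := Sum.inr (Sum.inr ())

/-- The edges `r→a` (for `a ∈ A`) and `b→r` (for `b ∈ B`) of `D`. -/
def rootEdges (α β : Type*) : Set (BVert α β × BVert α β) :=
  {e | (∃ a : α, e = (broot α β, Sum.inl a)) ∨
       (∃ b : β, e = (Sum.inr (Sum.inl b), broot α β))}

/-- The directed edges `a→b` of `D` coming from edges `{a,b}` of the bipartite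
graph with edge set `F ⊆ α × β`. -/
def liftEdges {α β : Type*} (F : Set (α × β)) : Set (BVert α β × BVert α β) :=
  {e | ∃ p ∈ F, e = (Sum.inl p.1, Sum.inr (Sum.inl p.2))}

/-- The edge set of the digraph `D` built from the bipartite graph with edge set `F`. -/
def Dedges {α β : Type*} (F : Set (α × β)) : Set (BVert α β × BVert α β) :=
  liftEdges F ∪ rootEdges α β

theorem sc_of_cover {α β : Type*} (hA : Nonempty α) (hB : Nonempty β) (G : Set (α × β))
    (h1 : ∀ a : α, ∃ b : β, (a, b) ∈ G) (h2 : ∀ b : β, ∃ a : α, (a, b) ∈ G) :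
    StronglyConnects (liftEdges G ∪ rootEdges α β) := by
  have eA : ∀ a : α, ((broot α β, Sum.inl a) : BVert α β × BVert α β) ∈
      liftEdges G ∪ rootEdges α β := fun a => Or.inr (Or.inl ⟨a, rfl⟩)
  have eB : ∀ b : β, ((Sum.inr (Sum.inl b), broot α β) : BVert α β × BVert α β) ∈
      liftEdges G ∪ rootEdges α β := fun b => Or.inr (Or.inr ⟨b, rfl⟩)
  have eG : ∀ a b, (a, b) ∈ G →
      ((Sum.inl a, Sum.inr (Sum.inl b)) : BVert α β × BVert α β) ∈
      liftEdges G ∪ rootEdges α β := fun a b h => Or.inl ⟨(a, b), h, rfl⟩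
  have toR : ∀ u : BVert α β, Relation.ReflTransGen
      (fun a b => (a, b) ∈ liftEdges G ∪ rootEdges α β) u (broot α β) := by
    rintro (a | b | ⟨⟩)
    · obtain ⟨b, hb⟩ := h1 a
      exact Relation.ReflTransGen.head (eG a b hb) (Relation.ReflTransGen.single (eB b))
    · exact Relation.ReflTransGen.single (eB b)
    · exact Relation.ReflTransGen.refl
  have fromR : ∀ u : BVert α β, Relation.ReflTransGen
      (fun a b => (a, b) ∈ liftEdges G ∪ rootEdges α β) (broot α β) u := by
    rintro (a | b | ⟨⟩)
    · exact Relation.ReflTransGen.single (eA a)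
    · obtain ⟨a, ha⟩ := h2 b
      exact Relation.ReflTransGen.head (eA a) (Relation.ReflTransGen.single (eG a b ha))
    · exact Relation.ReflTransGen.refl
  exact fun u v => (toR u).trans (fromR v)

theorem sc_structure {α β : Type*} (F : Set (α × β)) (S : Set (BVert α β × BVert α β))
    (hS : S ⊆ Dedges F) (hc : StronglyConnects S) :
    ∃ G ⊆ F, S = liftEdges G ∪ rootEdges α β ∧
      (∀ a : α, ∃ b : β, (a, b) ∈ G) ∧ (∀ b : β, ∃ a : α, (a, b) ∈ G) := by
  have hout : ∀ u v : BVert α β, u ≠ v → ∃ w, (u, w) ∈ S := by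
    intro u v h
    rcases (hc u v).cases_head with e | ⟨w, hw, _⟩
    · exact absurd e h
    · exact ⟨w, hw⟩
  have hin : ∀ u v : BVert α β, u ≠ v → ∃ w, (w, v) ∈ S := by
    intro u v h
    rcases (hc u v).cases_tail with e | ⟨w, _, hw⟩
    · exact absurd e.symm h
    · exact ⟨w, hw⟩
  refine ⟨{p | p ∈ F ∧ ((Sum.inl p.1, Sum.inr (Sum.inl p.2)) : BVert α β × BVert α β) ∈ S},
    fun p hp => hp.1, ?_, ?_, ?_⟩
  · apply Set.Subset.antisymm
    · intro e he
      rcases hS he with ⟨p, hp, rfl⟩ | h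
      · exact Or.inl ⟨p, ⟨hp, he⟩, rfl⟩
      · exact Or.inr h
    · rintro e (⟨p, hp, rfl⟩ | ⟨a, rfl⟩ | ⟨b, rfl⟩)
      · exact hp.2
      · obtain ⟨w, hw⟩ := hin (broot α β) (Sum.inl a) (by simp [broot])
        rcases hS hw with ⟨p, hp, h⟩ | ⟨a', h⟩ | ⟨b', h⟩ <;> simp [broot] at h
        obtain ⟨rfl, _⟩ := h
        exact hw
      · obtain ⟨w, hw⟩ := hout (Sum.inr (Sum.inl b)) (broot α β) (by simp [broot])
        rcases hS hw with ⟨p, hp, h⟩ | ⟨a', h⟩ | ⟨b', h⟩ <;> simp [broot] at h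
        obtain ⟨_, rfl⟩ := h
        exact hw
  · intro a
    obtain ⟨w, hw⟩ := hout (Sum.inl a) (broot α β) (by simp [broot])
    rcases hS hw with ⟨⟨x, y⟩, hp, h⟩ | ⟨a', h⟩ | ⟨b', h⟩ <;> simp [broot] at h
    obtain ⟨rfl, rfl⟩ := h
    exact ⟨y, hp, hw⟩
  · intro b
    obtain ⟨w, hw⟩ := hin (broot α β) (Sum.inr (Sum.inl b)) (by simp [broot])
    rcases hS hw with ⟨⟨x, y⟩, hp, h⟩ | ⟨a', h⟩ | ⟨b', h⟩ <;> simp [broot] at h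
    obtain ⟨rfl, rfl⟩ := h
    exact ⟨x, hp, hw⟩

theorem lift_mono {α β : Type*} {G F : Set (α × β)} (h : G ⊆ F) :
    liftEdges G ∪ rootEdges α β ⊆ Dedges F := by
  rintro e (⟨p, hp, rfl⟩ | he)
  · exact Or.inl ⟨p, h hp, rfl⟩
  · exact Or.inr he

theorem lift_inj {α β : Type*} {G G' : Set (α × β)}
    (h : liftEdges G ∪ rootEdges α β = liftEdges G' ∪ rootEdges α β) : G ⊆ G' := by
  intro p hp
  have : ((Sum.inl p.1, Sum.inr (Sum.inl p.2)) : BVert α β × BVert α β) ∈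
      liftEdges G' ∪ rootEdges α β := h ▸ Or.inl ⟨p, hp, rfl⟩
  rcases this with ⟨⟨x, y⟩, hq, h⟩ | ⟨a', h⟩ | ⟨b', h⟩ <;> simp [broot] at h
  obtain ⟨h1, h2⟩ := h
  obtain ⟨a, b⟩ := p
  subst h1 h2
  exact hq

theorem ncard_lift {α β : Type*} [Fintype α] [Fintype β] (G : Set (α × β)) :
    (liftEdges G ∪ rootEdges α β).ncard = G.ncard + (Fintype.card α + Fintype.card β) := by
  have h1 : liftEdges G = (fun p : α × β =>
      ((Sum.inl p.1, Sum.inr (Sum.inl p.2)) : BVert α β × BVert α β)) '' G := by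
    ext e
    simp only [liftEdges, Set.mem_ofPred_eq, Set.mem_image, eq_comm]
  have h2 : rootEdges α β =
      Set.range (fun s : α ⊕ β => (Sum.elim (fun a => (broot α β, Sum.inl a))
        (fun b => (Sum.inr (Sum.inl b), broot α β)) s : BVert α β × BVert α β)) := by
    ext e
    simp only [rootEdges, Set.mem_ofPred_eq, Set.mem_range, Sum.exists, Sum.elim_inl,
      Sum.elim_inr, eq_comm]
  rw [Set.ncard_union_eq ?_ (Set.toFinite _) (Set.toFinite _)]
  · congr 1
    · rw [h1]
      apply Set.ncard_image_of_injective
      rintro ⟨a, b⟩ ⟨c, d⟩ h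
      simpa using h
    · rw [h2, ← Set.image_univ, Set.ncard_image_of_injective, Set.ncard_univ,
        Nat.card_eq_fintype_card, Fintype.card_sum]
      rintro (a | b) (c | d) h <;> simp [broot] at h <;> simp [h]
  · rw [Set.disjoint_left]
    rintro e ⟨p, _, rfl⟩ (⟨a', h⟩ | ⟨b', h⟩) <;> simp [broot] at h

/-- For a bipartite graph `H` with both parts nonempty and no
isolated vertices, a set `F' ⊆ F` of edges of `H` is an edge cover of `H` iff
the corresponding directed edges together with all root edges strongly connect
`D`; consequently, the minimum size of an edge cover of `H` equals the minimum
size of a strongly connecting edge set of `D` minus `|A| + |B|`. -/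
theorem edge_cover_iff_scss {α β : Type*} [Fintype α] [Fintype β]
    (F : Set (α × β))
    (hA : Nonempty α) (hB : Nonempty β)
    (hisoA : ∀ a : α, ∃ b : β, (a, b) ∈ F)
    (hisoB : ∀ b : β, ∃ a : α, (a, b) ∈ F) :
    (∀ F' ⊆ F,
      (((∀ a : α, ∃ b : β, (a, b) ∈ F') ∧ (∀ b : β, ∃ a : α, (a, b) ∈ F')) ↔
        StronglyConnects (liftEdges F' ∪ rootEdges α β))) ∧
    sInf {n : ℕ | ∃ F' : Set (α × β), F' ⊆ F ∧
        (∀ a : α, ∃ b : β, (a, b) ∈ F') ∧ (∀ b : β, ∃ a : α, (a, b) ∈ F') ∧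
        F'.ncard = n} =
      sInf {n : ℕ | ∃ S : Set (BVert α β × BVert α β), S ⊆ Dedges F ∧
          StronglyConnects S ∧ S.ncard = n} -
        (Fintype.card α + Fintype.card β) := by
  constructor
  · intro G hG
    constructor
    · rintro ⟨h1, h2⟩
      exact sc_of_cover hA hB G h1 h2
    · intro h
      obtain ⟨G', _, e, h1, h2⟩ := sc_structure F _
        (lift_mono hG) h
      have hs := lift_inj e.symm
      exact ⟨fun a => (h1 a).imp fun b hb => hs hb, fun b => (h2 b).imp fun a ha => hs ha⟩
  · set X := {n : ℕ | ∃ F' : Set (α × β), F' ⊆ F ∧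
        (∀ a : α, ∃ b : β, (a, b) ∈ F') ∧ (∀ b : β, ∃ a : α, (a, b) ∈ F') ∧
        F'.ncard = n} with hX
    set Y := {n : ℕ | ∃ S : Set (BVert α β × BVert α β), S ⊆ Dedges F ∧
          StronglyConnects S ∧ S.ncard = n} with hY
    have hXY : ∀ n ∈ X, n + (Fintype.card α + Fintype.card β) ∈ Y := by
      rintro n ⟨G, hG, h1, h2, rfl⟩
      exact ⟨_, lift_mono hG,
        sc_of_cover hA hB G h1 h2, ncard_lift G⟩
    have hYX : ∀ n ∈ Y, ∃ m ∈ X, n = m + (Fintype.card α + Fintype.card β) := by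
      rintro n ⟨S, hS, hc, rfl⟩
      obtain ⟨G, hG, rfl, h1, h2⟩ := sc_structure F S hS hc
      exact ⟨_, ⟨G, hG, h1, h2, rfl⟩, ncard_lift G⟩
    have hXn : X.Nonempty := ⟨_, F, subset_rfl, hisoA, hisoB, rfl⟩
    have hx := Nat.sInf_mem hXn
    have hy := Nat.sInf_mem (⟨_, hXY _ hx⟩ : Y.Nonempty)
    have l1 := Nat.sInf_le (hXY _ hx)
    obtain ⟨m, hm, e⟩ := hYX _ hy
    have l2 := Nat.sInf_le hm
    omega
end

section
/- Let k ≥ 5 be an integer, and let OPT, OPT_H, n and n_4, n_5, …, n_k be real numbers satisfying: OPT > n − 1, OPT ≥ ((i−1)/(i−2))·(n_i − 1) for every integer i with 4 ≤ i ≤ k, OPT ≥ OPT_H ≥ 0, OPT_H ≤ 2·(n_4 − 1), and OPT > 0. Then (k/(k−1))·(n − n_k) + Σ_{i=4}^{k−1} (i/(i−1))·(n_{i+1} − n_i) + OPT_H < (π²/6 − 1/36 + 1/(k(k−1)))·OPT. -/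
lemma cpb_basel (k : ℕ) :
    ∑ i ∈ Finset.range k, 1 / (i : ℝ) ^ 2 + 1 / (k : ℝ) ≤ Real.pi ^ 2 / 6 := by
  have hm : Monotone (fun k : ℕ => ∑ i ∈ Finset.range k, 1 / (i : ℝ) ^ 2 + 1 / (k : ℝ)) := by
    apply monotone_nat_of_le_succ
    intro m
    rw [Finset.sum_range_succ]
    rcases Nat.eq_zero_or_pos m with h | h
    · subst h; norm_num
    · have hp : (0 : ℝ) < m := by exact_mod_cast h
      have : 1 / (m : ℝ) ^ 2 + 1 / ((m : ℝ) + 1) - 1 / (m : ℝ)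
          = 1 / ((m : ℝ) ^ 2 * (m + 1)) := by
        field_simp
        ring
      have h0 : 0 ≤ 1 / ((m : ℝ) ^ 2 * (m + 1)) := by positivity
      push_cast
      linarith
  have ht := hasSum_zeta_two.tendsto_sum_nat.add (tendsto_one_div_atTop_nhds_zero_nat (𝕜 := ℝ))
  rw [add_zero] at ht
  exact hm.ge_of_tendsto ht k

lemma cpb_sum (k : ℕ) (hk : 4 ≤ k) (OPT n : ℝ) (a : ℕ → ℝ)
    (h2 : ∀ i : ℕ, 4 ≤ i → i ≤ k → (((i : ℝ) - 1) / ((i : ℝ) - 2)) * (a i - 1) ≤ OPT) :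
    ((k : ℝ) / ((k : ℝ) - 1)) * (n - a k) +
        ∑ i ∈ Finset.Ico 4 k, ((i : ℝ) / ((i : ℝ) - 1)) * (a (i + 1) - a i) ≤
      ((k : ℝ) / ((k : ℝ) - 1)) * (n - 1) - 4 / 3 * (a 4 - 1)
        + OPT * ∑ i ∈ Finset.Ico 4 k, 1 / (i : ℝ) ^ 2 := by
  induction k, hk using Nat.le_induction with
  | base => norm_num; linarith
  | succ k hk ih =>
    have ih := ih (fun i h h' => h2 i h (by omega))
    rw [Finset.sum_Ico_succ_top hk, Finset.sum_Ico_succ_top hk]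
    have h := h2 (k + 1) (by omega) le_rfl
    have hk4 : (4 : ℝ) ≤ k := by exact_mod_cast hk
    have hk1 : (0 : ℝ) < k - 1 := by linarith
    have hk0 : (0 : ℝ) < k := by linarith
    push_cast at h ⊢
    rw [show (k : ℝ) + 1 - 1 = k by ring] at h ⊢
    rw [show (k : ℝ) + 1 - 2 = k - 1 by ring] at h
    have h' := mul_le_mul_of_nonneg_right h (by positivity : 0 ≤ 1 / (k : ℝ) ^ 2)
    have e1 : (k : ℝ) / (k - 1) * (a (k + 1) - 1) * (1 / (k : ℝ) ^ 2)
        = ((k : ℝ) / (k - 1) - (k + 1) / k) * (a (k + 1) - 1) := by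
      field_simp
      ring
    rw [e1] at h'
    linarith

/-- the analytic core of the performance-guarantee analysis of the
modified cycle-contraction algorithm: under the stated bounds relating `OPT`,
`OPT_H`, `n` and `n_4, …, n_k`, the number of edges returned is less than
`(π²/6 − 1/36 + 1/(k(k−1)))·OPT`. -/
theorem contraction_performance_bound (k : ℕ) (hk : 5 ≤ k)
    (OPT OPTH n : ℝ) (a : ℕ → ℝ)
    (h1 : n - 1 < OPT)
    (h2 : ∀ i : ℕ, 4 ≤ i → i ≤ k → (((i : ℝ) - 1) / ((i : ℝ) - 2)) * (a i - 1) ≤ OPT)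
    (h3 : OPTH ≤ OPT) (h4 : 0 ≤ OPTH) (h5 : OPTH ≤ 2 * (a 4 - 1)) (h6 : 0 < OPT) :
    ((k : ℝ) / ((k : ℝ) - 1)) * (n - a k) +
        ∑ i ∈ Finset.Ico 4 k, ((i : ℝ) / ((i : ℝ) - 1)) * (a (i + 1) - a i) + OPTH <
      (Real.pi ^ 2 / 6 - 1 / 36 + 1 / ((k : ℝ) * ((k : ℝ) - 1))) * OPT := by
  have hs := cpb_sum k (by omega) OPT n a h2
  have hb := cpb_basel k
  rw [← Finset.sum_range_add_sum_Ico _ (by omega : 4 ≤ k)] at hb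
  norm_num [Finset.sum_range_succ] at hb
  have hk4 : (5 : ℝ) ≤ k := by exact_mod_cast hk
  have hk1 : (0 : ℝ) < k - 1 := by linarith
  have hk0 : (0 : ℝ) < k := by linarith
  have hn := mul_lt_mul_of_pos_left h1 (by positivity : 0 < (k : ℝ) / (k - 1))
  have e : (k : ℝ) / (k - 1) = 1 + 1 / k + 1 / (k * (k - 1)) := by
    field_simp
    ring
  have hc : (k : ℝ) / (k - 1) + 1 / 3 + ∑ i ∈ Finset.Ico 4 k, 1 / (i : ℝ) ^ 2
      ≤ Real.pi ^ 2 / 6 - 1 / 36 + 1 / ((k : ℝ) * ((k : ℝ) - 1)) := by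
    rw [e]
    simp only [one_div] at hb ⊢
    linarith
  have hm := mul_le_mul_of_nonneg_right hc h6.le
  linarith
end
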